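/- There exists an absolute constant C > 1 such that for every prime p and every finite symmetric generating set A of G = SL₂(F_p) with N := |A| > C, every element of G can be written as a product of at most C·(log|G| / log(N/C))^d elements of A, where d = log 8 / log(3/2). -/

import Mathlib

open Pointwise

instance (p : ℕ) : DecidableEq (Matrix.SpecialLinearGroup (Fin 2) (ZMod p)) := by
  unfold Matrix.SpecialLinearGroup
  infer_instance

/-!
Let `A` be a symmetric generating set containing `1`, and `q` the order of the field. By linear
algebra, no nonzero polynomial of degree at most three in the matrix entries vanishes on `A ^ 125`.
In particular `A ^ 125` contains an element `t` of generic trace `τ`, that is `τ ≠ 0, 2, -2`, whose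
centralizer is a maximal torus.

Suppose first that `A ^ (2 * n)` has no element of generic trace in some conjugate of this torus.
Walking there from `t`, one generator at a time, we reach an element `s` of `A ^ (2 * n + 2)` with
generic trace that commutes with at most six elements of `A ^ (2 * n)`. The set `O` of conjugates of
`s` under `A ^ n` then has size comparable to that of `A ^ n`. An element of `SL₂` is determined, up
to two choices, by its trace and the traces of its products with two matrices in general position;
counting the ways of writing a group element as a product of two members of `O` therefore gives
`|O| ^ 3 ≪ |O * A ^ 125 * O| ^ 2`, so that `|A ^ n| ^ 3 ≪ |A ^ (8 * n + 129)| ^ 2`.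

Suppose now that every conjugate torus is met. Counting over the roughly `q ^ 2` conjugates, and
applying the previous bound to the torus that is met least, gives `q ^ 12 ≪ |A ^ (14 * n)| ^ 5`. For
`H = A ^ (14 * n)`, pigeonholing produces many upper unipotent elements of `H ^ 4`, with parameters
`X`, and many dilations `ξ` by which upper triangular elements of `H ^ 2` act on them. Passing twice
from `X` to `X + ξ • X` fills more than half of `F`, and the Bruhat decomposition then yields the
whole group in boundedly many further multiplications.

Each step of the first kind multiplies `n` by about `8` and, up to an additive constant,
`log |A ^ n|` by `3 / 2`: this is the origin of the exponent `log 8 / log (3 / 2)`.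
-/

namespace SL2Growth

open Finset Module
open scoped MatrixGroups

section Group

variable {G : Type*} [Group G]

theorem inv_pow_eq_self [DecidableEq G] {A : Finset G} (hinv : A⁻¹ = A) (n : ℕ) :
    (A ^ n)⁻¹ = A ^ n := by
  rw [← inv_pow, hinv]

theorem exists_mem_pow_of_mem_insert_one_pow [DecidableEq G] {A : Finset G} {n : ℕ} {g : G}
    (hg : g ∈ insert 1 A ^ n) : ∃ j ≤ n, g ∈ A ^ j := by
  induction n generalizing g with
  | zero => exact ⟨0, le_rfl, by simpa using hg⟩
  | succ n ih =>
    rw [pow_succ] at hg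
    obtain ⟨x, hx, a, ha, rfl⟩ := mem_mul.1 hg
    obtain ⟨j, hj, hxj⟩ := ih hx
    rcases mem_insert.1 ha with rfl | ha
    · exact ⟨j, hj.trans n.le_succ, by simpa using hxj⟩
    · exact ⟨j + 1, by lia, by simpa [pow_succ] using mul_mem_mul hxj ha⟩

theorem induction_of_symm_of_closure_eq_top [DecidableEq G] {A : Finset G} (hinv : A⁻¹ = A)
    (hgen : Subgroup.closure (A : Set G) = ⊤) {P : G → Prop} (one : P 1)
    (mul_right : ∀ g, P g → ∀ a ∈ A, P (g * a)) (g : G) : P g := by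
  have hg : g ∈ Subgroup.closure (A : Set G) := hgen ▸ Subgroup.mem_top g
  induction hg using Subgroup.closure_induction_right with
  | one => exact one
  | mul_right x _ a ha ih => exact mul_right x ih a ha
  | mul_inv_cancel x _ a ha ih => exact mul_right x ih a⁻¹ (by rw [← hinv]; exact inv_mem_inv ha)

/-- The part of a finite set `S` lying in the centralizer of `s`. -/
noncomputable def centralizerIn (S : Finset G) (s : G) : Finset G :=
  open Classical in {x ∈ S | Commute x s}

theorem mem_centralizerIn {S : Finset G} {s x : G} :
    x ∈ centralizerIn S s ↔ x ∈ S ∧ Commute x s := by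
  simp [centralizerIn]

theorem card_le_card_centralizerIn_mul_card_image_conj [DecidableEq G] (X : Finset G) (s : G) :
    #X ≤ #(centralizerIn (X⁻¹ * X) s) * #(X.image fun x ↦ x * s * x⁻¹) := by
  refine card_le_mul_card_image X _ fun b hb ↦ ?_
  obtain ⟨x₀, hx₀, rfl⟩ := mem_image.1 hb
  refine card_le_card_of_injOn (x₀⁻¹ * ·) (fun x hx ↦ ?_) (mul_right_injective x₀⁻¹).injOn
  obtain ⟨hxX, hx⟩ := mem_filter.1 hx
  refine mem_centralizerIn.2 ⟨mul_mem_mul (inv_mem_inv hx₀) hxX, ?_⟩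
  calc x₀⁻¹ * x * s = x₀⁻¹ * (x * s * x⁻¹) * x := by group
    _ = x₀⁻¹ * (x₀ * s * x₀⁻¹) * x := by rw [hx]
    _ = s * (x₀⁻¹ * x) := by group

end Group

/-! ### Escape from linear conditions -/

section Escape

/-- The functions `G → F` vanishing at every point of `S`. -/
def vanishingOn {G : Type*} (F : Type*) [Field F] (S : Set G) : Submodule F (G → F) where
  carrier := {f | ∀ g ∈ S, f g = 0}
  zero_mem' _ _ := rfl
  add_mem' hf hf' g hg := by simp [hf g hg, hf' g hg]
  smul_mem' c f hf g hg := by simp [hf g hg]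

variable {G F : Type*} [Group G] [DecidableEq G] [Field F] {A : Finset G} {V : Submodule F (G → F)}

theorem eq_zero_of_vanishing_stable (hinv : A⁻¹ = A) (hone : 1 ∈ A)
    (hgen : Subgroup.closure (A : Set G) = ⊤) (hV : ∀ f ∈ V, ∀ x, (fun g ↦ f (x * g)) ∈ V) {m : ℕ}
    (hstable : ∀ f ∈ V, (∀ g ∈ A ^ m, f g = 0) → ∀ g ∈ A ^ (m + 1), f g = 0)
    {f : G → F} (hf : f ∈ V) (hfA : ∀ g ∈ A ^ m, f g = 0) : f = 0 := by
  have htranslate : ∀ x, ∀ g ∈ A ^ m, f (x * g) = 0 := by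
    intro x
    induction x using induction_of_symm_of_closure_eq_top hinv hgen with
    | one => simpa using hfA
    | mul_right x hx a ha =>
      intro g hg
      rw [mul_assoc]
      exact hstable _ (hV f hf x) hx _ (by rw [pow_succ']; exact mul_mem_mul ha hg)
  funext x
  simpa using htranslate x 1 (one_mem_pow hone)

theorem exists_vanishingOn_finrank_le [FiniteDimensional F V] (hinv : A⁻¹ = A) (hone : 1 ∈ A)
    (hgen : Subgroup.closure (A : Set G) = ⊤) (hV : ∀ f ∈ V, ∀ x, (fun g ↦ f (x * g)) ∈ V)
    (m : ℕ) : ∃ B ⊆ A ^ m, #B ≤ m ∧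
      finrank F ↥(V ⊓ vanishingOn F (B : Set G)) ≤ finrank F V - m := by
  induction m with
  | zero => exact ⟨∅, by simp, by simp, Submodule.finrank_mono inf_le_left⟩
  | succ m ih =>
    obtain ⟨B, hBA, hBcard, hB⟩ := ih
    have hAA : A ^ m ⊆ A ^ (m + 1) := pow_subset_pow_right hone m.le_succ
    by_cases hvan : ∀ f ∈ V ⊓ vanishingOn F (B : Set G), ∀ g ∈ A ^ (m + 1), f g = 0
    · have hbot : V ⊓ vanishingOn F (B : Set G) = ⊥ := by
        refine (Submodule.eq_bot_iff _).2 fun f hf ↦ ?_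
        exact eq_zero_of_vanishing_stable hinv hone hgen hV
          (fun f hf hfA ↦ hvan f ⟨hf, fun b hb ↦ hfA b (hBA hb)⟩) hf.1
          fun g hg ↦ hvan f hf g (hAA hg)
      exact ⟨B, hBA.trans hAA, by lia, by rw [hbot, finrank_bot]; exact Nat.zero_le _⟩
    · push Not at hvan
      obtain ⟨f, hf, g, hgA, hfg⟩ := hvan
      have hlt : V ⊓ vanishingOn F (insert g B : Finset G) < V ⊓ vanishingOn F (B : Set G) := by
        refine SetLike.lt_iff_le_and_exists.2 ⟨fun f' hf' ↦ ⟨hf'.1, fun b hb ↦ ?_⟩, f, hf,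
          fun hf' ↦ hfg (hf'.2 g (mem_coe.2 (mem_insert_self g B)))⟩
        exact hf'.2 b (mem_coe.2 (mem_insert_of_mem hb))
      refine ⟨insert g B, insert_subset hgA (hBA.trans hAA), (card_insert_le _ _).trans (by lia),
        ?_⟩
      have := Submodule.finrank_lt_finrank_of_lt hlt
      lia

theorem exists_subset_pow_forall_vanishing_eq_zero [FiniteDimensional F V] (hinv : A⁻¹ = A)
    (hone : 1 ∈ A) (hgen : Subgroup.closure (A : Set G) = ⊤)
    (hV : ∀ f ∈ V, ∀ x, (fun g ↦ f (x * g)) ∈ V) {D : ℕ} (hD : finrank F V ≤ D) :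
    ∃ B ⊆ A ^ D, #B ≤ D ∧ ∀ f ∈ V, (∀ b ∈ B, f b = 0) → f = 0 := by
  obtain ⟨B, hBA, hBcard, hB⟩ := exists_vanishingOn_finrank_le hinv hone hgen hV D
  have hbot : V ⊓ vanishingOn F (B : Set G) = ⊥ := Submodule.finrank_eq_zero.1 (by lia)
  exact ⟨B, hBA, hBcard, fun f hf hfB ↦ (Submodule.eq_bot_iff _).1 hbot f ⟨hf, hfB⟩⟩

end Escape

section CubicFunctions

theorem finrank_span_range_pow_le {ι K R : Type*} [Fintype ι] [Field K] [CommRing R] [Algebra K R]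
    (b : ι → R) (n : ℕ) :
    finrank K ↥(Submodule.span K (Set.range b) ^ n) ≤ Fintype.card ι ^ n := by
  classical
  rw [Submodule.span_pow, ← Fintype.coe_image_univ, ← coe_pow]
  exact (finrank_span_finset_le_card _).trans
    (card_pow_le.trans (Nat.pow_le_pow_left card_image_le n))

variable {F : Type*} [Field F]

/-- The constant function `1` (indexed by `none`) and the four matrix entries, as functions on
`SL(2, F)`. -/
def affineCoordinate : Option (Fin 2 × Fin 2) → SL(2, F) → F
  | none => 1
  | some (i, j) => fun g ↦ g.1 i j

variable (F) in
/-- The functions on `SL(2, F)` given by polynomials of degree at most one in the entries. -/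
def affineFunctions : Submodule F (SL(2, F) → F) :=
  Submodule.span F (Set.range affineCoordinate)

variable (F) in
/-- The functions on `SL(2, F)` given by polynomials of degree at most three in the entries. -/
def cubicFunctions : Submodule F (SL(2, F) → F) := affineFunctions F ^ 3

theorem const_mem_affineFunctions (c : F) : (fun _ ↦ c) ∈ affineFunctions F := by
  have h : affineCoordinate none ∈ affineFunctions F := Submodule.subset_span ⟨none, rfl⟩
  convert Submodule.smul_mem _ c h using 1
  ext
  simp [affineCoordinate]

theorem apply_mem_affineFunctions (i j : Fin 2) :
    (fun g : SL(2, F) ↦ g.1 i j) ∈ affineFunctions F :=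
  Submodule.subset_span ⟨some (i, j), rfl⟩

theorem trace_add_const_mem_affineFunctions (c : F) :
    (fun g : SL(2, F) ↦ g.1.trace + c) ∈ affineFunctions F := by
  simp only [Matrix.trace_fin_two]
  exact add_mem (add_mem (apply_mem_affineFunctions 0 0) (apply_mem_affineFunctions 1 1))
    (const_mem_affineFunctions c)

theorem mul_mul_apply_mem_affineFunctions (m n : Matrix (Fin 2) (Fin 2) F) (i j : Fin 2) :
    (fun g : SL(2, F) ↦ (m * g.1 * n) i j) ∈ affineFunctions F := by
  have h : (fun g : SL(2, F) ↦ (m * g.1 * n) i j) =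
      ∑ k, ∑ l, (m i l * n k j) • fun g : SL(2, F) ↦ g.1 l k := by
    ext g
    simp only [Matrix.mul_apply, Finset.sum_apply, Pi.smul_apply, smul_eq_mul, sum_mul]
    exact sum_congr rfl fun k _ ↦ sum_congr rfl fun l _ ↦ by ring
  rw [h]
  exact sum_mem fun k _ ↦ sum_mem fun l _ ↦
    Submodule.smul_mem _ _ (apply_mem_affineFunctions l k)

theorem inv_apply_mem_affineFunctions (i j : Fin 2) :
    (fun g : SL(2, F) ↦ (g⁻¹).1 i j) ∈ affineFunctions F := by
  simp only [Matrix.SpecialLinearGroup.SL2_inv_expl]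
  fin_cases i <;> fin_cases j
  · exact apply_mem_affineFunctions 1 1
  · exact neg_mem (apply_mem_affineFunctions 0 1)
  · exact neg_mem (apply_mem_affineFunctions 1 0)
  · exact apply_mem_affineFunctions 0 0

theorem mul_mul_mem_cubicFunctions {f₁ f₂ f₃ : SL(2, F) → F} (h₁ : f₁ ∈ affineFunctions F)
    (h₂ : f₂ ∈ affineFunctions F) (h₃ : f₃ ∈ affineFunctions F) :
    f₁ * f₂ * f₃ ∈ cubicFunctions F := by
  rw [cubicFunctions, pow_succ, sq]
  exact Submodule.mul_mem_mul (Submodule.mul_mem_mul h₁ h₂) h₃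

theorem trace_mul_conj_mem_cubicFunctions (m y : Matrix (Fin 2) (Fin 2) F) :
    (fun h : SL(2, F) ↦ (m * (h.1 * y * (h⁻¹).1)).trace) ∈ cubicFunctions F := by
  have h : (fun h : SL(2, F) ↦ (m * (h.1 * y * (h⁻¹).1)).trace) =
      ∑ i, ∑ j, (fun h ↦ (m * h.1 * y) i j) * (fun h ↦ (h⁻¹).1 j i) * fun _ ↦ 1 := by
    ext h
    simp [← Matrix.mul_assoc, Matrix.trace, Matrix.mul_apply (M := m * h.1 * y)]
  rw [h]
  exact sum_mem fun i _ ↦ sum_mem fun j _ ↦ mul_mul_mem_cubicFunctions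
    (mul_mul_apply_mem_affineFunctions m y i j) (inv_apply_mem_affineFunctions j i)
    (const_mem_affineFunctions 1)

theorem trace_mul_trace_sub_mul_trace_add_mem_cubicFunctions :
    (fun g : SL(2, F) ↦ g.1.trace * (g.1.trace - 2) * (g.1.trace + 2)) ∈ cubicFunctions F := by
  have h0 := trace_add_const_mem_affineFunctions (0 : F)
  have h2 := trace_add_const_mem_affineFunctions (-2 : F)
  simp only [add_zero, ← sub_eq_add_neg] at h0 h2
  exact mul_mul_mem_cubicFunctions h0 h2 (trace_add_const_mem_affineFunctions 2)

theorem cubicFunctions_translate {f : SL(2, F) → F} (hf : f ∈ cubicFunctions F) (x : SL(2, F)) :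
    (fun g ↦ f (x * g)) ∈ cubicFunctions F := by
  let translate : (SL(2, F) → F) →ₐ[F] (SL(2, F) → F) :=
    AlgHom.ofLinearMap (LinearMap.funLeft F F (x * ·)) rfl fun _ _ ↦ rfl
  have haffine : (affineFunctions F).map translate.toLinearMap ≤ affineFunctions F := by
    rw [affineFunctions, Submodule.map_span_le]
    rintro _ ⟨_ | ⟨i, j⟩, rfl⟩
    · exact const_mem_affineFunctions 1
    · have h := mul_mul_apply_mem_affineFunctions x.1 1 i j
      simp only [Matrix.mul_one] at h
      exact h
  have hcubic : (cubicFunctions F).map translate.toLinearMap ≤ cubicFunctions F := by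
    rw [cubicFunctions, Submodule.map_pow]
    exact pow_le_pow_left' haffine 3
  exact hcubic (Submodule.mem_map_of_mem hf)

theorem finrank_cubicFunctions_le : finrank F (cubicFunctions F) ≤ 125 :=
  finrank_span_range_pow_le affineCoordinate 3

/-- A set of elements on which no nonzero cubic function vanishes identically. -/
def IsTestSet (B : Finset SL(2, F)) : Prop :=
  ∀ f ∈ cubicFunctions F, (∀ b ∈ B, f b = 0) → f = 0

theorem exists_isTestSet [DecidableEq SL(2, F)] {A : Finset SL(2, F)} (hinv : A⁻¹ = A)
    (hone : 1 ∈ A) (hgen : Subgroup.closure (A : Set SL(2, F)) = ⊤) :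
    ∃ B ⊆ A ^ 125, #B ≤ 125 ∧ IsTestSet B := by
  have : FiniteDimensional F (cubicFunctions F) :=
    Module.Finite.iff_fg.2 ((Submodule.fg_span (Set.finite_range _)).pow 3)
  exact exists_subset_pow_forall_vanishing_eq_zero hinv hone hgen
    (fun f hf ↦ cubicFunctions_translate hf) finrank_cubicFunctions_le

end CubicFunctions

section GenericTrace

variable {F : Type*} [Field F]

/-- The traces of the elements of `SL(2, F)` that have distinct eigenvalues and nonzero trace. -/
def IsGenericTrace (τ : F) : Prop := τ ≠ 0 ∧ τ ^ 2 ≠ 4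

theorem isGenericTrace_iff {τ : F} : IsGenericTrace τ ↔ τ * (τ - 2) * (τ + 2) ≠ 0 := by
  rw [IsGenericTrace, mul_assoc, mul_ne_zero_iff, ← sub_ne_zero (a := τ ^ 2)]
  ring_nf

theorem exists_isGenericTrace [Fintype F] (hF : 3 < Fintype.card F) :
    ∃ τ : F, IsGenericTrace τ := by
  classical
  have hcard : #({0, 2, -2} : Finset F) < #(univ : Finset F) :=
    card_le_three.trans_lt (by rwa [card_univ])
  obtain ⟨τ, -, hτ⟩ := exists_mem_notMem_of_card_lt_card hcard
  simp only [mem_insert, mem_singleton, not_or] at hτ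
  exact ⟨τ, isGenericTrace_iff.2 <| mul_ne_zero (mul_ne_zero hτ.1 (sub_ne_zero.2 hτ.2.1))
    (by simpa [add_eq_zero_iff_eq_neg] using hτ.2.2)⟩

theorem exists_trace_eq (τ : F) : ∃ g : SL(2, F), g.1.trace = τ :=
  ⟨⟨!![0, -1; 1, τ], by simp [Matrix.det_fin_two]⟩, by simp [Matrix.trace_fin_two]⟩

theorem IsTestSet.exists_isGenericTrace [Fintype F] {B : Finset SL(2, F)} (hB : IsTestSet B)
    (hF : 3 < Fintype.card F) : ∃ b ∈ B, IsGenericTrace b.1.trace := by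
  by_contra! hcon
  simp only [isGenericTrace_iff, not_not] at hcon
  obtain ⟨τ, hτ⟩ := SL2Growth.exists_isGenericTrace hF
  obtain ⟨g, rfl⟩ := exists_trace_eq τ
  exact isGenericTrace_iff.1 hτ
    (congrFun (hB _ trace_mul_trace_sub_mul_trace_add_mem_cubicFunctions hcon) g)

end GenericTrace

/-! ### Centralizers in `SL(2, F)` -/

section Centralizers

variable {F : Type*} [Field F]

theorem commute_coe_iff {x y : SL(2, F)} : Commute x.1 y.1 ↔ Commute x y :=
  ⟨fun h ↦ Subtype.ext h, fun h ↦ congrArg Subtype.val h.eq⟩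

theorem trace_conj (g x : SL(2, F)) : (g * x * g⁻¹).1.trace = x.1.trace :=
  calc (g * x * g⁻¹).1.trace = (g⁻¹ * (g * x)).1.trace := Matrix.trace_mul_comm (g * x).1 g⁻¹.1
    _ = x.1.trace := by rw [inv_mul_cancel_left]

theorem mem_range_scalar_iff {w : Matrix (Fin 2) (Fin 2) F} :
    w ∈ Set.range (Matrix.scalar (Fin 2)) ↔ w 0 1 = 0 ∧ w 1 0 = 0 ∧ w 0 0 = w 1 1 := by
  constructor
  · rintro ⟨c, rfl⟩
    simp
  · rintro ⟨h01, h10, h⟩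
    refine ⟨w 0 0, ?_⟩
    ext i j
    fin_cases i <;> fin_cases j <;> simp [h01, h10, h]

theorem exists_eq_smul_one_add_smul_of_commute {w x : Matrix (Fin 2) (Fin 2) F}
    (hw : w ∉ Set.range (Matrix.scalar (Fin 2))) (hxw : Commute x w) :
    ∃ α β : F, x = α • 1 + β • w := by
  have h := hxw.eq
  simp only [← Matrix.ext_iff, Matrix.mul_apply, Fin.sum_univ_two, Fin.forall_fin_two] at h
  obtain ⟨⟨h00, h01⟩, h10, -⟩ := h
  suffices ∃ β, x 0 1 = β * w 0 1 ∧ x 1 0 = β * w 1 0 ∧ x 0 0 - x 1 1 = β * (w 0 0 - w 1 1) by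
    obtain ⟨β, h01, h10, hd⟩ := this
    refine ⟨x 0 0 - β * w 0 0, β, ?_⟩
    have h11 : x 1 1 = x 0 0 - β * w 0 0 + β * w 1 1 := by linear_combination -hd
    ext i j
    fin_cases i <;> fin_cases j <;> simp [h01, h10, h11]
  simp only [mem_range_scalar_iff, not_and_or] at hw
  rcases hw with hw | hw | hw
  · refine ⟨x 0 1 / w 0 1, ?_, ?_, ?_⟩ <;> field_simp
    · linear_combination -h00
    · linear_combination h01
  · refine ⟨x 1 0 / w 1 0, ?_, ?_, ?_⟩ <;> field_simp
    · linear_combination h00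
    · linear_combination -h10
  · have hw' : w 0 0 - w 1 1 ≠ 0 := sub_ne_zero.2 hw
    refine ⟨(x 0 0 - x 1 1) / (w 0 0 - w 1 1), ?_, ?_, ?_⟩ <;> field_simp
    · linear_combination -h01
    · linear_combination h10

theorem commute_of_commute_of_commute {w x y : Matrix (Fin 2) (Fin 2) F}
    (hw : w ∉ Set.range (Matrix.scalar (Fin 2))) (hxw : Commute x w) (hyw : Commute y w) :
    Commute x y := by
  obtain ⟨α, β, rfl⟩ := exists_eq_smul_one_add_smul_of_commute hw hxw
  exact ((Commute.one_left y).smul_left α).add_left (hyw.symm.smul_left β)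

theorem notMem_range_scalar_of_trace_sq_ne {w : SL(2, F)} (hw : w.1.trace ^ 2 ≠ 4) :
    w.1 ∉ Set.range (Matrix.scalar (Fin 2)) := by
  rw [mem_range_scalar_iff]
  rintro ⟨h01, -, h⟩
  have hdet : w.1 0 0 * w.1 1 1 - w.1 0 1 * w.1 1 0 = 1 := by rw [← Matrix.det_fin_two, w.2]
  refine hw ?_
  rw [Matrix.trace_fin_two]
  linear_combination (w.1 0 0 - w.1 1 1) * h + 4 * hdet + 4 * w.1 1 0 * h01

theorem commute_of_commute_of_commute_of_trace_sq_ne {w x y : SL(2, F)} (hw : w.1.trace ^ 2 ≠ 4)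
    (hxw : Commute x w) (hyw : Commute y w) : Commute x y :=
  commute_coe_iff.1 <| commute_of_commute_of_commute (notMem_range_scalar_of_trace_sq_ne hw)
    (commute_coe_iff.2 hxw) (commute_coe_iff.2 hyw)

theorem coe_add_coe_inv (x : SL(2, F)) : x.1 + x⁻¹.1 = x.1.trace • 1 := by
  rw [Matrix.SpecialLinearGroup.coe_inv, Matrix.adjugate_fin_two, Matrix.trace_fin_two]
  ext i j
  fin_cases i <;> fin_cases j <;> simp [add_comm]

theorem sub_mul_sub_inv_eq_zero {x y : SL(2, F)} (hxy : Commute x y)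
    (htr : x.1.trace = y.1.trace) : (x.1 - y.1) * (x.1 - y⁻¹.1) = 0 := by
  have hyx : y⁻¹.1 = x.1.trace • 1 - y.1 := by rw [htr, ← coe_add_coe_inv, add_sub_cancel_left]
  have hx : x⁻¹.1 = x.1.trace • 1 - x.1 := by rw [← coe_add_coe_inv, add_sub_cancel_left]
  have hxx : x.1 * x⁻¹.1 = 1 := congrArg Subtype.val (mul_inv_cancel x)
  have hyy : y.1 * y⁻¹.1 = 1 := congrArg Subtype.val (mul_inv_cancel y)
  have hcomm : x.1 * y.1 = y.1 * x.1 := commute_coe_iff.2 hxy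
  rw [hyx] at hyy ⊢
  rw [hx] at hxx
  calc (x.1 - y.1) * (x.1 - (x.1.trace • 1 - y.1))
      = y.1 * (x.1.trace • 1 - y.1) - x.1 * (x.1.trace • 1 - x.1) + (x.1 * y.1 - y.1 * x.1) := by
        simp only [mul_sub, sub_mul]
        abel
    _ = 0 := by rw [hyy, hxx, hcomm, sub_self, sub_self, add_zero]

theorem eq_zero_of_trace_eq_zero_of_det_eq_zero {w : SL(2, F)} (hw : w.1.trace ^ 2 ≠ 4)
    {d : Matrix (Fin 2) (Fin 2) F} (hdw : Commute d w.1) (htr : d.trace = 0) (hdet : d.det = 0) :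
    d = 0 := by
  obtain ⟨α, β, rfl⟩ :=
    exists_eq_smul_one_add_smul_of_commute (notMem_range_scalar_of_trace_sq_ne hw) hdw
  have hwdet : w.1 0 0 * w.1 1 1 - w.1 0 1 * w.1 1 0 = 1 := by rw [← Matrix.det_fin_two, w.2]
  simp only [Matrix.det_fin_two, Matrix.trace_fin_two, Matrix.add_apply, Matrix.smul_apply,
    Matrix.one_apply_eq, Matrix.one_apply_ne, smul_eq_mul, ne_eq, zero_ne_one, one_ne_zero,
    not_false_eq_true] at htr hdet hw
  have hβ : β = 0 := by
    have : β ^ 2 * ((w.1 0 0 + w.1 1 1) ^ 2 - 4) = 0 := by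
      linear_combination (2 * α + β * (w.1 0 0 + w.1 1 1)) * htr - 4 * hdet + 4 * β ^ 2 * hwdet
    simpa [sub_ne_zero.2 hw] using this
  have hα : α = 0 := by simpa [hβ] using hdet
  simp [hα, hβ]

theorem eq_or_eq_inv_of_commute_of_trace_eq {w x y : SL(2, F)} (hw : w.1.trace ^ 2 ≠ 4)
    (hxw : Commute x w) (hyw : Commute y w) (htr : x.1.trace = y.1.trace) :
    x = y ∨ x = y⁻¹ := by
  have hmul := sub_mul_sub_inv_eq_zero (commute_of_commute_of_commute_of_trace_sq_ne hw hxw hyw) htr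
  by_cases hdet : (x.1 - y.1).det = 0
  · refine .inl (Subtype.ext (sub_eq_zero.1 ?_))
    exact eq_zero_of_trace_eq_zero_of_det_eq_zero hw
      ((commute_coe_iff.2 hxw).sub_left (commute_coe_iff.2 hyw)) (by simp [htr]) hdet
  · refine .inr (Subtype.ext (sub_eq_zero.1 ?_))
    have hunit : IsUnit (x.1 - y.1) :=
      (Matrix.isUnit_iff_isUnit_det _).2 (isUnit_iff_ne_zero.2 hdet)
    exact hunit.mul_right_eq_zero.1 hmul

theorem card_le_two_of_commute_of_trace_eq {w : SL(2, F)} (hw : w.1.trace ^ 2 ≠ 4) {τ : F}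
    {T : Finset SL(2, F)} (hT : ∀ x ∈ T, Commute x w ∧ x.1.trace = τ) : #T ≤ 2 := by
  classical
  rcases T.eq_empty_or_nonempty with rfl | ⟨x₀, hx₀⟩
  · simp
  have hsub : T ⊆ {x₀, x₀⁻¹} := fun x hx ↦ by
    simpa using eq_or_eq_inv_of_commute_of_trace_eq hw (hT x hx).1 (hT x₀ hx₀).1
      ((hT x hx).2.trans (hT x₀ hx₀).2.symm)
  exact (card_le_card hsub).trans card_le_two

theorem card_le_two_of_commute_of_trace_eq_of_nonscalar {w : SL(2, F)}
    (hw : w.1 ∉ Set.range (Matrix.scalar (Fin 2))) {τ : F} (hτ : τ ^ 2 ≠ 4)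
    {T : Finset SL(2, F)} (hT : ∀ x ∈ T, Commute x w ∧ x.1.trace = τ) : #T ≤ 2 := by
  rcases T.eq_empty_or_nonempty with rfl | ⟨x₀, hx₀⟩
  · simp
  refine card_le_two_of_commute_of_trace_eq (w := x₀) ((hT x₀ hx₀).2 ▸ hτ)
    fun x hx ↦ ⟨?_, (hT x hx).2⟩
  exact commute_coe_iff.1 (commute_of_commute_of_commute hw (commute_coe_iff.2 (hT x hx).1)
    (commute_coe_iff.2 (hT x₀ hx₀).1))

theorem card_le_two_mul_card_of_trace_mem {w : SL(2, F)} (hw : w.1.trace ^ 2 ≠ 4)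
    {T : Finset SL(2, F)} {K : Finset F} (hT : ∀ x ∈ T, Commute x w ∧ x.1.trace ∈ K) :
    #T ≤ 2 * #K := by
  classical
  refine card_le_mul_card_image_of_maps_to (fun x hx ↦ (hT x hx).2) 2 fun τ _ ↦ ?_
  refine card_le_two_of_commute_of_trace_eq (τ := τ) hw fun x hx ↦ ?_
  obtain ⟨hxT, hxτ⟩ := mem_filter.1 hx
  exact ⟨(hT x hxT).1, hxτ⟩

theorem card_le_two_mul_card_of_commute [Fintype F] {w : SL(2, F)} (hw : w.1.trace ^ 2 ≠ 4)
    {T : Finset SL(2, F)} (hT : ∀ x ∈ T, Commute x w) : #T ≤ 2 * Fintype.card F :=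
  card_le_two_mul_card_of_trace_mem hw fun x hx ↦ ⟨hT x hx, mem_univ _⟩

theorem card_le_four_mul_card_of_commute_conj [Fintype F] {b t : SL(2, F)} (hb : b.1.trace ^ 2 ≠ 4)
    (ht : t.1.trace ^ 2 ≠ 4) {T : Finset SL(2, F)} (hT : ∀ g ∈ T, Commute (g * t * g⁻¹) b) :
    #T ≤ 4 * Fintype.card F := by
  classical
  have hconj : #(T.image fun g ↦ g * t * g⁻¹) ≤ 2 := by
    refine card_le_two_of_commute_of_trace_eq (τ := t.1.trace) hb fun x hx ↦ ?_
    obtain ⟨g, hg, rfl⟩ := mem_image.1 hx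
    exact ⟨hT g hg, trace_conj g t⟩
  have hfiber : #(centralizerIn (T⁻¹ * T) t) ≤ 2 * Fintype.card F :=
    card_le_two_mul_card_of_commute ht fun x hx ↦ (mem_centralizerIn.1 hx).2
  calc #T ≤ #(centralizerIn (T⁻¹ * T) t) * #(T.image fun g ↦ g * t * g⁻¹) :=
        card_le_card_centralizerIn_mul_card_image_conj T t
    _ ≤ 2 * Fintype.card F * 2 := Nat.mul_le_mul hfiber hconj
    _ = 4 * Fintype.card F := by ring

/-- The elements of `S` with generic trace in the centralizer of `s`. If `s` has generic trace, this
is the generic part of the intersection of `S` with the maximal torus containing `s`. -/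
noncomputable def torusPart (S : Finset SL(2, F)) (s : SL(2, F)) : Finset SL(2, F) :=
  open Classical in {x ∈ S | IsGenericTrace x.1.trace ∧ Commute x s}

theorem mem_torusPart {S : Finset SL(2, F)} {s x : SL(2, F)} :
    x ∈ torusPart S s ↔ x ∈ S ∧ IsGenericTrace x.1.trace ∧ Commute x s := by
  simp [torusPart]

theorem torusPart_eq_of_commute {b s : SL(2, F)} (hb : b.1.trace ^ 2 ≠ 4) (hs : s.1.trace ^ 2 ≠ 4)
    (hbs : Commute b s) (S : Finset SL(2, F)) : torusPart S b = torusPart S s := by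
  ext x
  have hcomm : Commute x b ↔ Commute x s :=
    ⟨fun h ↦ commute_of_commute_of_commute_of_trace_sq_ne hb h hbs.symm,
      fun h ↦ commute_of_commute_of_commute_of_trace_sq_ne hs h hbs⟩
  rw [mem_torusPart, mem_torusPart, hcomm]

theorem card_centralizerIn_le_card_torusPart_add_six {w : SL(2, F)} (hw : w.1.trace ^ 2 ≠ 4)
    (S : Finset SL(2, F)) : #(centralizerIn S w) ≤ #(torusPart S w) + 6 := by
  classical
  have hnongeneric : #(centralizerIn S w \ torusPart S w) ≤ 2 * #({0, 2, -2} : Finset F) := by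
    refine card_le_two_mul_card_of_trace_mem hw fun x hx ↦ ?_
    simp only [mem_sdiff, mem_centralizerIn, mem_torusPart, isGenericTrace_iff] at hx
    obtain ⟨⟨hxS, hxw⟩, hx⟩ := hx
    have htr : x.1.trace * (x.1.trace - 2) * (x.1.trace + 2) = 0 := by tauto
    simpa [hxw, or_assoc, sub_eq_zero, add_eq_zero_iff_eq_neg] using htr
  have hthree : #({0, 2, -2} : Finset F) ≤ 3 := card_le_three
  have := card_sdiff_add_card (centralizerIn S w) (torusPart S w)
  have := card_le_card (subset_union_left (s₁ := centralizerIn S w) (s₂ := torusPart S w))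
  lia

end Centralizers

section ConjugationPairing

variable {F : Type*} [Field F]

/-- The upper triangular unipotent matrix with off-diagonal entry `x`. -/
abbrev upperUnipotent (x : F) : SL(2, F) := .transvection Fin.zero_ne_one x

theorem coe_upperUnipotent (x : F) : (upperUnipotent x).1 = !![1, x; 0, 1] := by
  ext i j
  fin_cases i <;> fin_cases j <;> simp [Matrix.SpecialLinearGroup.transvection_coe]

theorem coe_inv_upperUnipotent (x : F) : (upperUnipotent x)⁻¹.1 = !![1, -x; 0, 1] := by
  rw [Matrix.SpecialLinearGroup.transvection_inv, coe_upperUnipotent]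

theorem trace_mul_conj_conj (m y : Matrix (Fin 2) (Fin 2) F) (g h k : SL(2, F)) :
    ((g.1 * m * g⁻¹.1) * (k.1 * (h.1 * y * h⁻¹.1) * k⁻¹.1)).trace =
      (m * ((g⁻¹ * k * h).1 * y * (g⁻¹ * k * h)⁻¹.1)).trace := by
  simp only [mul_inv_rev, inv_inv, Matrix.SpecialLinearGroup.coe_mul, Matrix.mul_assoc]
  rw [Matrix.trace_mul_comm g.1]
  simp only [Matrix.mul_assoc]

theorem apply_one_zero_mul_apply_one_zero_eq_zero [Fintype F] (hF : 2 < Fintype.card F)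
    {m d : Matrix (Fin 2) (Fin 2) F}
    (h : ∀ x : F, (m * ((upperUnipotent x).1 * d * (upperUnipotent x)⁻¹.1)).trace = 0) :
    m 1 0 * d 1 0 = 0 := by
  classical
  obtain ⟨x, -, hx⟩ : ∃ x ∈ (univ : Finset F), x ∉ ({0, 1} : Finset F) :=
    exists_mem_notMem_of_card_lt_card (card_le_two.trans_lt (by rwa [card_univ]))
  simp only [mem_insert, mem_singleton, not_or] at hx
  have hquad : ∀ x : F, (m * d).trace + x * ((m 0 0 - m 1 1) * d 1 0 - m 1 0 * (d 0 0 - d 1 1)) -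
      x ^ 2 * (m 1 0 * d 1 0) = 0 := by
    intro x
    rw [← h x, coe_upperUnipotent, coe_inv_upperUnipotent]
    simp only [Matrix.trace_fin_two, Matrix.mul_apply, Fin.sum_univ_two, Matrix.of_apply,
      Matrix.cons_val', Matrix.cons_val_zero, Matrix.cons_val_one, Matrix.cons_val_fin_one]
    ring
  have hx01 : x * (x - 1) ≠ 0 := mul_ne_zero hx.1 (sub_ne_zero.2 hx.2)
  refine (mul_eq_zero.1 ?_).resolve_left hx01
  linear_combination x * hquad 1 - hquad x + (1 - x) * hquad 0

theorem mem_range_scalar_of_conj_apply_one_zero_eq_zero {m : Matrix (Fin 2) (Fin 2) F}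
    (h : ∀ g : SL(2, F), (g.1 * m * g⁻¹.1) 1 0 = 0) : m ∈ Set.range (Matrix.scalar (Fin 2)) := by
  have hrow (g : SL(2, F)) : (g.1 1 0 * m 0 0 + g.1 1 1 * m 1 0) * g.1 1 1 -
      (g.1 1 0 * m 0 1 + g.1 1 1 * m 1 1) * g.1 1 0 = 0 := by
    rw [← h g, Matrix.SpecialLinearGroup.coe_inv, Matrix.adjugate_fin_two]
    simp [Matrix.mul_apply, Fin.sum_univ_two, sub_eq_add_neg]
  have h10 : m 1 0 = 0 := by simpa using hrow 1
  have h01 : m 0 1 = 0 := by simpa using hrow ⟨!![0, -1; 1, 0], by simp⟩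
  have hdiag : m 0 0 = m 1 1 := by
    simpa [h10, h01, sub_eq_zero] using hrow ⟨!![1, 0; 1, 1], by simp⟩
  exact mem_range_scalar_iff.2 ⟨h01, h10, hdiag⟩

theorem eq_zero_of_trace_mul_conj_eq_zero [Fintype F] (hF : 2 < Fintype.card F)
    {m y : Matrix (Fin 2) (Fin 2) F} (hy : y ∉ Set.range (Matrix.scalar (Fin 2)))
    (hytr : y.trace ≠ 0) (h : ∀ g : SL(2, F), (m * (g.1 * y * g⁻¹.1)).trace = 0) : m = 0 := by
  obtain ⟨k, hk⟩ : ∃ k : SL(2, F), (k.1 * y * k⁻¹.1) 1 0 ≠ 0 := by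
    by_contra! hcon
    exact hy (mem_range_scalar_of_conj_apply_one_zero_eq_zero hcon)
  have hm : ∀ g : SL(2, F), (g.1 * m * g⁻¹.1) 1 0 = 0 := fun g ↦
    (mul_eq_zero.1 <| apply_one_zero_mul_apply_one_zero_eq_zero hF fun x ↦ by
      rw [trace_mul_conj_conj, h]).resolve_right hk
  obtain ⟨c, rfl⟩ := mem_range_scalar_of_conj_apply_one_zero_eq_zero hm
  have hc : c * y.trace = 0 := by simpa [← Matrix.smul_one_eq_diagonal] using h 1
  simp [(mul_eq_zero.1 hc).resolve_right hytr]

end ConjugationPairing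

/-! ### Growth of conjugacy classes -/

section TripleTrace

variable {F : Type*} [Field F]

/-- Up to sign, the determinant of `1, w, x, v` in the four-dimensional space of matrices. -/
def tripleTrace (w x v : Matrix (Fin 2) (Fin 2) F) : F := ((w * x - x * w) * v).trace

theorem eq_zero_of_tripleTrace_ne_zero {w x v d : Matrix (Fin 2) (Fin 2) F}
    (hD : tripleTrace w x v ≠ 0) (h1 : d.trace = 0) (hw : (d * w).trace = 0)
    (hx : (d * x).trace = 0) (hv : (d * v).trace = 0) : d = 0 := by
  simp only [tripleTrace, Matrix.trace_fin_two, Matrix.mul_apply, Matrix.sub_apply,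
    Fin.sum_univ_two] at hD h1 hw hx hv
  have h11 : d 1 1 = -d 0 0 := by linear_combination h1
  rw [h11] at hw hx hv
  have h00 : d 0 0 = 0 := by
    refine (mul_eq_zero.1 ?_).resolve_left hD
    linear_combination (w 0 1 * x 1 0 - x 0 1 * w 1 0) * hv +
      (x 0 1 * v 1 0 - v 0 1 * x 1 0) * hw + (v 0 1 * w 1 0 - w 0 1 * v 1 0) * hx
  have h01 : d 0 1 = 0 := by
    refine (mul_eq_zero.1 ?_).resolve_left hD
    linear_combination ((w 0 0 - w 1 1) * x 0 1 - (x 0 0 - x 1 1) * w 0 1) * hv +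
      ((x 0 0 - x 1 1) * v 0 1 - (v 0 0 - v 1 1) * x 0 1) * hw +
      ((v 0 0 - v 1 1) * w 0 1 - (w 0 0 - w 1 1) * v 0 1) * hx
  have h10 : d 1 0 = 0 := by
    refine (mul_eq_zero.1 ?_).resolve_left hD
    linear_combination ((x 0 0 - x 1 1) * w 1 0 - (w 0 0 - w 1 1) * x 1 0) * hv +
      ((v 0 0 - v 1 1) * x 1 0 - (x 0 0 - x 1 1) * v 1 0) * hw +
      ((w 0 0 - w 1 1) * v 1 0 - (v 0 0 - v 1 1) * w 1 0) * hx
  ext i j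
  fin_cases i <;> fin_cases j <;> simp [h00, h01, h10, h11]

theorem det_sub_eq_trace_mul {x y : Matrix (Fin 2) (Fin 2) F} (hdet : y.det = x.det)
    (htr : y.trace = x.trace) : (y - x).det = ((y - x) * x).trace := by
  simp only [Matrix.det_fin_two, Matrix.trace_fin_two, Matrix.mul_apply, Matrix.sub_apply,
    Fin.sum_univ_two] at hdet htr ⊢
  linear_combination hdet - (x 0 0 + x 1 1) * htr

theorem eq_of_tripleTrace_ne_zero {w v x y z : Matrix (Fin 2) (Fin 2) F}
    (hD : tripleTrace w x v ≠ 0) (hydet : y.det = x.det) (hzdet : z.det = x.det)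
    (hy : y.trace = x.trace) (hz : z.trace = x.trace)
    (hyw : (y * w).trace = (x * w).trace) (hzw : (z * w).trace = (x * w).trace)
    (hyv : (y * v).trace = (x * v).trace) (hzv : (z * v).trace = (x * v).trace)
    (hyx : y ≠ x) (hzx : z ≠ x) : y = z := by
  have hdy := det_sub_eq_trace_mul hydet hy
  have hdz := det_sub_eq_trace_mul hzdet hz
  set c := ((y - x) * x).trace with hc
  set c' := ((z - x) * x).trace with hc'
  have hc0 : c ≠ 0 := fun h ↦ hyx <| sub_eq_zero.1 <| eq_zero_of_tripleTrace_ne_zero hD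
    (by simp [hy]) (by simp [sub_mul, hyw]) h (by simp [sub_mul, hyv])
  have hc'0 : c' ≠ 0 := fun h ↦ hzx <| sub_eq_zero.1 <| eq_zero_of_tripleTrace_ne_zero hD
    (by simp [hz]) (by simp [sub_mul, hzw]) h (by simp [sub_mul, hzv])
  have hprop : c' • (y - x) = c • (z - x) := by
    refine sub_eq_zero.1 (eq_zero_of_tripleTrace_ne_zero hD ?_ ?_ ?_ ?_)
    · simp [hy, hz]
    · simp [sub_mul, hyw, hzw]
    · rw [sub_mul, smul_mul_assoc, smul_mul_assoc, Matrix.trace_sub, Matrix.trace_smul,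
        Matrix.trace_smul, ← hc, ← hc', smul_eq_mul, smul_eq_mul, mul_comm, sub_self]
    · simp [sub_mul, hyv, hzv]
  have hcc : c' = c := by
    have hdet := congrArg Matrix.det hprop
    rw [Matrix.det_smul, Matrix.det_smul, hdy, hdz, Fintype.card_fin] at hdet
    refine mul_left_cancel₀ (mul_ne_zero hc0 hc'0) ?_
    linear_combination hdet
  rw [hcc] at hprop
  exact sub_left_injective (smul_right_injective _ hc0 hprop)

end TripleTrace

section TraceFibres

variable {F : Type*} [Field F]

theorem trace_inv_mul (x y : SL(2, F)) :
    (x⁻¹ * y).1.trace = x.1.trace * y.1.trace - (x * y).1.trace := by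
  have h : x⁻¹.1 = x.1.trace • 1 - x.1 := by rw [← coe_add_coe_inv, add_sub_cancel_left]
  calc (x⁻¹.1 * y.1).trace = x.1.trace * y.1.trace - (x.1 * y.1).trace := by
        rw [h, sub_mul, smul_mul_assoc, one_mul, Matrix.trace_sub, Matrix.trace_smul, smul_eq_mul]

theorem card_le_two_of_tripleTrace_ne_zero {w v : SL(2, F)} {τ : F} {T : Finset SL(2, F)}
    (htr : ∀ x ∈ T, x.1.trace = τ) (hw : ∀ x ∈ T, (x⁻¹ * w).1.trace = τ)
    (hv : ∀ x ∈ T, (x⁻¹ * v).1.trace = τ) (hD : ∀ x ∈ T, tripleTrace w.1 x.1 v.1 ≠ 0) :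
    #T ≤ 2 := by
  have hmul : ∀ u : SL(2, F), (∀ x ∈ T, (x⁻¹ * u).1.trace = τ) → ∀ x ∈ T, ∀ y ∈ T,
      (y.1 * u.1).trace = (x.1 * u.1).trace := by
    intro u hu x hx y hy
    have hxu := (trace_inv_mul x u).symm.trans (hu x hx)
    have hyu := (trace_inv_mul y u).symm.trans (hu y hy)
    rw [htr x hx] at hxu
    rw [htr y hy] at hyu
    exact sub_right_injective (hyu.trans hxu.symm)
  by_contra! hcard
  obtain ⟨x, y, z, hx, hy, hz, hxy, hxz, hyz⟩ := two_lt_card_iff.1 hcard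
  refine hyz (Subtype.ext (eq_of_tripleTrace_ne_zero (hD x hx) (y.2.trans x.2.symm)
    (z.2.trans x.2.symm) ?_ ?_ (hmul w hw x hx y hy) (hmul w hw x hx z hz) (hmul v hv x hx y hy)
    (hmul v hv x hx z hz) (Subtype.coe_injective.ne hxy.symm) (Subtype.coe_injective.ne hxz.symm)))
  · rw [htr x hx, htr y hy]
  · rw [htr x hx, htr z hz]

/- On the fibre `x * h * y = z` the matrix `v = x * (h * y * h⁻¹) = z * h⁻¹` is fixed, so that the
traces of `x`, `x⁻¹ * w` and `x⁻¹ * v = h * y * h⁻¹` are prescribed. -/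
theorem card_le_two_mul_card_of_tripleTrace_ne_zero {w h : SL(2, F)} {τ : F}
    {P : Finset (SL(2, F) × SL(2, F))} {Z : Finset SL(2, F)}
    (hP : ∀ q ∈ P, q.1.1.trace = τ ∧ (q.1⁻¹ * w).1.trace = τ ∧ q.2.1.trace = τ)
    (hD : ∀ q ∈ P, tripleTrace w.1 q.1.1 (q.1 * (h * q.2 * h⁻¹)).1 ≠ 0)
    (hZ : ∀ q ∈ P, q.1 * h * q.2 ∈ Z) : #P ≤ 2 * #Z := by
  classical
  refine card_le_mul_card_image_of_maps_to hZ 2 fun z _ ↦ ?_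
  have hmem {q : SL(2, F) × SL(2, F)} (hq : q ∈ {q ∈ P | q.1 * h * q.2 = z}) :
      q ∈ P ∧ q.2 = h⁻¹ * q.1⁻¹ * z := by
    obtain ⟨hqP, rfl⟩ := mem_filter.1 hq
    exact ⟨hqP, by group⟩
  rw [← card_image_of_injOn (f := Prod.fst) fun q hq r hr hqr ↦
    Prod.ext hqr (by rw [(hmem hq).2, (hmem hr).2, hqr])]
  refine card_le_two_of_tripleTrace_ne_zero (w := w) (v := z * h⁻¹) (τ := τ) ?_ ?_ ?_ ?_ <;>
    simp only [forall_mem_image] <;> intro q hq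
  · exact (hP q (hmem hq).1).1
  · exact (hP q (hmem hq).1).2.1
  · rw [← (hP q (hmem hq).1).2.2, ← trace_conj h q.2, (hmem hq).2]
    group
  · convert hD q (hmem hq).1
    rw [(hmem hq).2]
    group

theorem IsTestSet.exists_tripleTrace_ne_zero [Fintype F] {B : Finset SL(2, F)} (hB : IsTestSet B)
    (hF : 2 < Fintype.card F) {w x y : SL(2, F)} (hxw : ¬Commute x w)
    (hy : IsGenericTrace y.1.trace) :
    ∃ h ∈ B, tripleTrace w.1 x.1 (x * (h * y * h⁻¹)).1 ≠ 0 := by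
  set m := (w.1 * x.1 - x.1 * w.1) * x.1 with hm
  have htriple (h : SL(2, F)) :
      tripleTrace w.1 x.1 (x * (h * y * h⁻¹)).1 = (m * (h.1 * y.1 * h⁻¹.1)).trace :=
    congrArg Matrix.trace (mul_assoc _ _ _).symm
  by_contra! hcon
  have hvanish := hB _ (trace_mul_conj_mem_cubicFunctions m y.1) fun h hh ↦
    (htriple h).symm.trans (hcon h hh)
  have hm0 : m = 0 := eq_zero_of_trace_mul_conj_eq_zero hF
    (notMem_range_scalar_of_trace_sq_ne hy.2) hy.1 (congrFun hvanish)
  have hcomm : w.1 * x.1 - x.1 * w.1 = 0 :=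
    calc w.1 * x.1 - x.1 * w.1 = m * x⁻¹.1 := by
          rw [hm, mul_assoc, show x.1 * x⁻¹.1 = 1 from congrArg Subtype.val (mul_inv_cancel x),
            mul_one]
      _ = 0 := by rw [hm0, zero_mul]
  exact hxw (commute_coe_iff.1 (sub_eq_zero.1 hcomm).symm)

theorem notMem_range_scalar_of_trace_inv_mul_eq {w x : SL(2, F)} (hw : w ≠ 1)
    (hx : x.1.trace ≠ 0) (hxw : (x⁻¹ * w).1.trace = x.1.trace) :
    w.1 ∉ Set.range (Matrix.scalar (Fin 2)) := by
  rintro ⟨c, hc⟩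
  have hcx : c * x.1.trace = x.1.trace :=
    calc c * x.1.trace = c * x⁻¹.1.trace := by
          simp [Matrix.adjugate_fin_two, Matrix.trace_fin_two, add_comm]
      _ = (x⁻¹.1 * Matrix.scalar (Fin 2) c).trace := by simp [← Matrix.smul_one_eq_diagonal]
      _ = (x⁻¹.1 * w.1).trace := by rw [hc]
      _ = x.1.trace := hxw
  refine hw (Subtype.ext ?_)
  rw [← hc, (mul_eq_right₀ hx).1 hcx, map_one]
  rfl

end TraceFibres

section ConjugacyClassGrowth

theorem card_mul_card_le_sum_card_filter_inv_mul_mem {G : Type*} [Group G] [DecidableEq G]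
    (S T : Finset G) : #S * #T ≤ ∑ w ∈ S * T, #{x ∈ S | x⁻¹ * w ∈ T} := by
  have hswap := sum_card_bipartiteAbove_eq_sum_card_bipartiteBelow (s := S) (t := S * T)
    fun x w ↦ x⁻¹ * w ∈ T
  simp only [bipartiteAbove, bipartiteBelow] at hswap
  rw [← hswap, ← smul_eq_mul]
  refine card_nsmul_le_sum _ _ _ fun x hx ↦ card_le_card_of_injOn (x * ·) (fun y hy ↦ ?_)
    (mul_right_injective x).injOn
  exact mem_filter.2 ⟨mul_mem_mul hx hy, by simpa using hy⟩

variable {F : Type*} [Field F] [Fintype F] [DecidableEq SL(2, F)] {τ : F} {B O : Finset SL(2, F)}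

theorem IsTestSet.card_mul_card_le_of_not_commute (hB : IsTestSet B) (hF : 2 < Fintype.card F)
    (hτ : IsGenericTrace τ) (hO : ∀ x ∈ O, x.1.trace = τ) {w : SL(2, F)} {Γ : Finset SL(2, F)}
    (hΓO : Γ ⊆ O) (hΓw : ∀ x ∈ Γ, x⁻¹ * w ∈ O) (hΓ : ∀ x ∈ Γ, ¬Commute x w) :
    #Γ * #O ≤ #B * (2 * #(O * insert 1 B * O)) := by
  classical
  let P (h : SL(2, F)) : Finset (SL(2, F) × SL(2, F)) :=
    {q ∈ Γ ×ˢ O | tripleTrace w.1 q.1.1 (q.1 * (h * q.2 * h⁻¹)).1 ≠ 0}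
  have hcover : Γ ×ˢ O ⊆ B.biUnion P := fun q hq ↦ by
    obtain ⟨hx, hy⟩ := mem_product.1 hq
    obtain ⟨h, hh, hne⟩ := hB.exists_tripleTrace_ne_zero hF (hΓ q.1 hx) (by rwa [hO q.2 hy])
    exact mem_biUnion.2 ⟨h, hh, mem_filter.2 ⟨hq, hne⟩⟩
  have hP : ∀ h ∈ B, #(P h) ≤ 2 * #(O * insert 1 B * O) := fun h hh ↦ by
    have hmem : ∀ q ∈ P h, q.1 ∈ Γ ∧ q.2 ∈ O := fun q hq ↦ mem_product.1 (mem_filter.1 hq).1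
    refine card_le_two_mul_card_of_tripleTrace_ne_zero (w := w) (τ := τ)
      (fun q hq ↦ ?_) (fun q hq ↦ (mem_filter.1 hq).2) fun q hq ↦ ?_ <;>
      obtain ⟨hx, hy⟩ := hmem q hq
    · exact ⟨hO _ (hΓO hx), hO _ (hΓw _ hx), hO _ hy⟩
    · exact mul_mem_mul (mul_mem_mul (hΓO hx) (mem_insert_of_mem hh)) hy
  calc #Γ * #O = #(Γ ×ˢ O) := (card_product _ _).symm
    _ ≤ #(B.biUnion P) := card_le_card hcover
    _ ≤ #B * (2 * #(O * insert 1 B * O)) := card_biUnion_le_card_mul _ _ _ hP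

theorem IsTestSet.card_filter_inv_mul_mem_mul_card_le (hB : IsTestSet B) (hF : 2 < Fintype.card F)
    (hτ : IsGenericTrace τ) (hO : ∀ x ∈ O, x.1.trace = τ) {w : SL(2, F)} (hw : w ≠ 1) :
    #{x ∈ O | x⁻¹ * w ∈ O} * #O ≤ 2 * #O + #B * (2 * #(O * insert 1 B * O)) := by
  classical
  rcases ({x ∈ O | x⁻¹ * w ∈ O}).eq_empty_or_nonempty with hempty | ⟨x₀, hx₀⟩
  · simp [hempty]
  set Γ := {x ∈ O | x⁻¹ * w ∈ O}
  have hΓ : ∀ x ∈ Γ, x ∈ O ∧ x⁻¹ * w ∈ O := fun x hx ↦ mem_filter.1 hx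
  have htr₀ := hO x₀ (hΓ x₀ hx₀).1
  have hnonscalar : w.1 ∉ Set.range (Matrix.scalar (Fin 2)) :=
    notMem_range_scalar_of_trace_inv_mul_eq hw (htr₀ ▸ hτ.1)
      ((hO _ (hΓ x₀ hx₀).2).trans htr₀.symm)
  have hcomm : #{x ∈ Γ | Commute x w} ≤ 2 :=
    card_le_two_of_commute_of_trace_eq_of_nonscalar hnonscalar hτ.2 fun x hx ↦
      ⟨(mem_filter.1 hx).2, hO x (hΓ x (mem_filter.1 hx).1).1⟩
  have hnoncomm : #{x ∈ Γ | ¬Commute x w} * #O ≤ #B * (2 * #(O * insert 1 B * O)) :=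
    hB.card_mul_card_le_of_not_commute hF hτ hO (fun x hx ↦ (hΓ x (mem_filter.1 hx).1).1)
      (fun x hx ↦ (hΓ x (mem_filter.1 hx).1).2) fun x hx ↦ (mem_filter.1 hx).2
  calc #Γ * #O = #{x ∈ Γ | Commute x w} * #O + #{x ∈ Γ | ¬Commute x w} * #O := by
        rw [← add_mul, card_filter_add_card_filter_not]
    _ ≤ 2 * #O + #B * (2 * #(O * insert 1 B * O)) := by gcongr

theorem IsTestSet.card_pow_three_le (hB : IsTestSet B) (hF : 2 < Fintype.card F)
    (hτ : IsGenericTrace τ) (hO : ∀ x ∈ O, x.1.trace = τ) :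
    #O ^ 3 ≤ (2 * #B + 3) * #(O * insert 1 B * O) ^ 2 := by
  set Z := O * insert 1 B * O
  have hOOZ : O * O ⊆ Z := by
    calc O * O = O * 1 * O := by rw [mul_one]
      _ ⊆ Z := mul_subset_mul_right (mul_subset_mul_left (by simp))
  have hOO : #(O * O) ≤ #Z := card_le_card hOOZ
  have hOZ : #O ≤ #Z := by
    rcases O.eq_empty_or_nonempty with rfl | hne
    · simp
    · exact (card_le_card_mul_left hne).trans hOO
  have hfibre : ∀ w ∈ O * O, #{x ∈ O | x⁻¹ * w ∈ O} * #O ≤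
      (if w = 1 then #O * #O else 0) + (2 * #O + #B * (2 * #Z)) := fun w _ ↦ by
    split_ifs with hw
    · exact (Nat.mul_le_mul_right _ (card_filter_le _ _)).trans (Nat.le_add_right _ _)
    · exact (hB.card_filter_inv_mul_mem_mul_card_le hF hτ hO hw).trans (Nat.le_add_left _ _)
  calc #O ^ 3 = #O * #O * #O := by ring
    _ ≤ (∑ w ∈ O * O, #{x ∈ O | x⁻¹ * w ∈ O}) * #O := by
      gcongr
      exact card_mul_card_le_sum_card_filter_inv_mul_mem O O
    _ = ∑ w ∈ O * O, #{x ∈ O | x⁻¹ * w ∈ O} * #O := sum_mul _ _ _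
    _ ≤ ∑ w ∈ O * O, ((if w = 1 then #O * #O else 0) + (2 * #O + #B * (2 * #Z))) :=
      sum_le_sum hfibre
    _ ≤ #O * #O + #(O * O) * (2 * #O + #B * (2 * #Z)) := by
      rw [sum_add_distrib, sum_const, smul_eq_mul, sum_ite_eq']
      gcongr
      split_ifs <;> simp
    _ ≤ #Z * #Z + #Z * (2 * #Z + #B * (2 * #Z)) := by gcongr
    _ = (2 * #B + 3) * #Z ^ 2 := by ring

end ConjugacyClassGrowth

/-! ### Growth unless every torus is met -/

section Pivot

variable {F : Type*} [Field F] [Fintype F] [DecidableEq SL(2, F)] {A : Finset SL(2, F)}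

theorem card_pow_three_le_of_card_centralizerIn_le (hF : 2 < Fintype.card F) (hinv : A⁻¹ = A)
    (hone : 1 ∈ A) (hgen : Subgroup.closure (A : Set SL(2, F)) = ⊤) {k m c : ℕ} {s : SL(2, F)}
    (hsA : s ∈ A ^ m) (hs : IsGenericTrace s.1.trace) (hc : #(centralizerIn (A ^ (2 * k)) s) ≤ c) :
    #(A ^ k) ^ 3 ≤ 253 * c ^ 3 * #(A ^ (4 * k + 2 * m + 125)) ^ 2 := by
  obtain ⟨B, hBA, hBcard, hB⟩ := exists_isTestSet hinv hone hgen
  set O := (A ^ k).image fun x ↦ x * s * x⁻¹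
  have hOcard : #(A ^ k) ≤ c * #O := by
    have horbit := card_le_card_centralizerIn_mul_card_image_conj (A ^ k) s
    rw [inv_pow_eq_self hinv, ← pow_add, ← two_mul] at horbit
    exact horbit.trans (Nat.mul_le_mul_right _ hc)
  have hOtr : ∀ x ∈ O, x.1.trace = s.1.trace := forall_mem_image.2 fun x _ ↦ trace_conj x s
  have hOA : O ⊆ A ^ (2 * k + m) := image_subset_iff.2 fun x hx ↦ by
    rw [show 2 * k + m = k + m + k by ring, pow_add, pow_add]
    exact mul_mem_mul (mul_mem_mul hx hsA) (by rw [← inv_pow_eq_self hinv]; exact inv_mem_inv hx)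
  have hinsert {n : ℕ} (hn : B ⊆ A ^ n) : insert 1 B ⊆ A ^ n := insert_subset (one_mem_pow hone) hn
  have hZA : O * insert 1 B * O ⊆ A ^ (4 * k + 2 * m + 125) := by
    rw [show 4 * k + 2 * m + 125 = 2 * k + m + 125 + (2 * k + m) by ring, pow_add, pow_add]
    exact mul_subset_mul (mul_subset_mul hOA (hinsert hBA)) hOA
  calc #(A ^ k) ^ 3 ≤ (c * #O) ^ 3 := by gcongr
    _ = c ^ 3 * #O ^ 3 := mul_pow _ _ _
    _ ≤ c ^ 3 * ((2 * 125 + 3) * #(A ^ (4 * k + 2 * m + 125)) ^ 2) := by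
      gcongr
      refine (hB.card_pow_three_le hF hs hOtr).trans ?_
      gcongr
    _ = 253 * c ^ 3 * #(A ^ (4 * k + 2 * m + 125)) ^ 2 := by ring

theorem torusPart_nonempty_or_card_pow_three_le (hF : 2 < Fintype.card F) (hinv : A⁻¹ = A)
    (hone : 1 ∈ A) (hgen : Subgroup.closure (A : Set SL(2, F)) = ⊤) {n : ℕ} {t : SL(2, F)}
    (htA : t ∈ A ^ (2 * n)) (ht : IsGenericTrace t.1.trace) :
    (∀ g : SL(2, F), (torusPart (A ^ (2 * n)) (g * t * g⁻¹)).Nonempty) ∨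
      #(A ^ n) ^ 3 ≤ 54648 * #(A ^ (8 * n + 129)) ^ 2 := by
  rw [or_iff_not_imp_right]
  intro hgrow g
  suffices ∀ g : SL(2, F), (torusPart (A ^ (2 * n)) (g⁻¹ * t * g⁻¹⁻¹)).Nonempty by
    simpa using this g⁻¹
  intro g
  induction g using induction_of_symm_of_closure_eq_top hinv hgen with
  | one => exact ⟨t, mem_torusPart.2 ⟨htA, ht, by simp⟩⟩
  | mul_right g hg a ha =>
    obtain ⟨b, hb⟩ := hg
    obtain ⟨hbA, hbtr, hbg⟩ := mem_torusPart.1 hb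
    set s := a⁻¹ * b * a⁻¹⁻¹
    set u := (g * a)⁻¹ * t * (g * a)⁻¹⁻¹
    have hstr : s.1.trace = b.1.trace := trace_conj a⁻¹ b
    have hsA : s ∈ A ^ (2 * n + 2) := by
      rw [show 2 * n + 2 = 1 + 2 * n + 1 by ring, pow_add, pow_add, pow_one]
      exact mul_mem_mul (mul_mem_mul (hinv ▸ inv_mem_inv ha) hbA) (by rwa [inv_inv])
    have hutr : u.1.trace = t.1.trace := trace_conj (g * a)⁻¹ t
    have hsu : Commute s u := by
      have hu : u = a⁻¹ * (g⁻¹ * t * g⁻¹⁻¹) * a⁻¹⁻¹ := by simp [u, mul_assoc]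
      rw [hu, Commute.conj_iff]
      exact hbg
    by_contra hempty
    have hcard : #(centralizerIn (A ^ (2 * n)) s) ≤ 6 := by
      have hle := card_centralizerIn_le_card_torusPart_add_six (hstr ▸ hbtr.2) (A ^ (2 * n))
      rwa [torusPart_eq_of_commute (hstr ▸ hbtr.2) (hutr ▸ ht.2) hsu,
        not_nonempty_iff_eq_empty.1 hempty, card_empty, zero_add] at hle
    refine hgrow ?_
    have h := card_pow_three_le_of_card_centralizerIn_le hF hinv hone hgen hsA (hstr ▸ hbtr) hcard
    rwa [show 4 * n + 2 * (2 * n + 2) + 125 = 8 * n + 129 by ring,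
      show 253 * 6 ^ 3 = 54648 by norm_num] at h

end Pivot

section ManyTori

variable {F : Type*} [Field F] [Fintype F]

theorem card_pow_three_le_two_mul_card :
    Fintype.card F ^ 3 ≤ 2 * Nat.card SL(2, F) := by
  classical
  let f (q : Fˣ × F × F) : SL(2, F) :=
    ⟨!![(q.1 : F), q.2.1; q.2.2, (1 + q.2.1 * q.2.2) / q.1], by
      simp [Matrix.det_fin_two, mul_div_cancel₀ _ q.1.ne_zero]⟩
  have hf : Function.Injective f := fun q r hqr ↦ by
    have hcoe (i j) : (f q).1 i j = (f r).1 i j := by rw [hqr]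
    exact Prod.ext (Units.ext (hcoe 0 0)) (Prod.ext (hcoe 0 1) (hcoe 1 0))
  have hle := Nat.card_le_card_of_injective f hf
  rw [Nat.card_prod, Nat.card_prod, Nat.card_eq_fintype_card, Nat.card_eq_fintype_card,
    Fintype.card_units] at hle
  have hhalf : Fintype.card F ≤ 2 * (Fintype.card F - 1) := by
    have := Fintype.one_lt_card (α := F)
    lia
  calc Fintype.card F ^ 3 = Fintype.card F * (Fintype.card F * Fintype.card F) := by ring
    _ ≤ 2 * (Fintype.card F - 1) * (Fintype.card F * Fintype.card F) := by gcongr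
    _ = 2 * ((Fintype.card F - 1) * (Fintype.card F * Fintype.card F)) := by ring
    _ ≤ 2 * Nat.card SL(2, F) := by gcongr

theorem card_sq_mul_le_of_le_card_torusPart {t : SL(2, F)} (ht : t.1.trace ^ 2 ≠ 4)
    {S : Finset SL(2, F)} {Y : ℕ} (hY : ∀ g : SL(2, F), Y ≤ #(torusPart S (g * t * g⁻¹))) :
    Fintype.card F ^ 2 * Y ≤ 8 * #S := by
  classical
  have hdouble := card_nsmul_le_card_nsmul' (s := S) (t := univ)
    (fun b g ↦ b ∈ torusPart S (g * t * g⁻¹)) (m := 4 * Fintype.card F) (n := Y) ?_ ?_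
  · rw [smul_eq_mul, smul_eq_mul, card_univ, ← Nat.card_eq_fintype_card] at hdouble
    refine Nat.le_of_mul_le_mul_left ?_ (Fintype.card_pos (α := F))
    calc Fintype.card F * (Fintype.card F ^ 2 * Y) = Fintype.card F ^ 3 * Y := by ring
      _ ≤ 2 * Nat.card SL(2, F) * Y := by gcongr; exact card_pow_three_le_two_mul_card
      _ = 2 * (Nat.card SL(2, F) * Y) := mul_assoc _ _ _
      _ ≤ 2 * (#S * (4 * Fintype.card F)) := by gcongr
      _ = Fintype.card F * (8 * #S) := by ring
  · intro g _
    refine (hY g).trans (card_le_card fun b hb ↦ ?_)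
    exact (mem_bipartiteBelow _).2 ⟨(mem_torusPart.1 hb).1, hb⟩
  · intro b _
    by_cases hb : IsGenericTrace b.1.trace
    · refine card_le_four_mul_card_of_commute_conj hb.2 ht fun g hg ↦ ?_
      exact (mem_torusPart.1 ((mem_bipartiteAbove _).1 hg).2).2.2.symm
    · simp [bipartiteAbove, mem_torusPart, hb]

variable [DecidableEq SL(2, F)] {A : Finset SL(2, F)}

theorem card_pow_twelve_le_of_torusPart_nonempty (hF : 2 < Fintype.card F) (hinv : A⁻¹ = A)
    (hone : 1 ∈ A) (hgen : Subgroup.closure (A : Set SL(2, F)) = ⊤) {n : ℕ} (hn : 125 ≤ 2 * n)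
    {t : SL(2, F)} (ht : t.1.trace ^ 2 ≠ 4)
    (hne : ∀ g : SL(2, F), (torusPart (A ^ (2 * n)) (g * t * g⁻¹)).Nonempty) :
    Fintype.card F ^ 12 ≤ 448 ^ 3 * 253 * #(A ^ (14 * n)) ^ 5 := by
  have hmono {k l : ℕ} (hkl : k ≤ l) : A ^ k ⊆ A ^ l := pow_subset_pow_right hone hkl
  obtain ⟨g, hmin⟩ := Finite.exists_min fun g : SL(2, F) ↦
    #(torusPart (A ^ (4 * n)) (g * t * g⁻¹))
  obtain ⟨s, hs⟩ := hne g
  obtain ⟨hsA, hstr, hsg⟩ := mem_torusPart.1 hs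
  set Y := #(torusPart (A ^ (4 * n)) (g * t * g⁻¹)) with hY
  have hYpos : 0 < Y := card_pos.2 ⟨s, mem_torusPart.2 ⟨hmono (by lia) hsA, hstr, hsg⟩⟩
  have hcent : #(centralizerIn (A ^ (2 * (2 * n))) s) ≤ 7 * Y := by
    have hle := card_centralizerIn_le_card_torusPart_add_six hstr.2 (A ^ (4 * n))
    rw [torusPart_eq_of_commute hstr.2 (by rwa [trace_conj]) hsg, ← hY] at hle
    rw [← mul_assoc]
    exact hle.trans (by lia)
  have hgrow : #(A ^ (2 * n)) ^ 3 ≤ 253 * (7 * Y) ^ 3 * #(A ^ (14 * n)) ^ 2 := by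
    refine (card_pow_three_le_of_card_centralizerIn_le hF hinv hone hgen hsA hstr hcent).trans ?_
    gcongr
    lia
  have hfour : Fintype.card F ^ 2 * Y ≤ 8 * #(A ^ (14 * n)) := by
    refine (card_sq_mul_le_of_le_card_torusPart ht hmin).trans ?_
    gcongr
    lia
  have htwo : Fintype.card F ^ 2 ≤ 8 * #(A ^ (2 * n)) := by
    simpa using card_sq_mul_le_of_le_card_torusPart ht fun g ↦ card_pos.2 (hne g)
  calc Fintype.card F ^ 12 = (Fintype.card F ^ 2) ^ 3 * (Fintype.card F ^ 2) ^ 3 := by ring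
    _ ≤ (Fintype.card F ^ 2) ^ 3 * (8 * #(A ^ (2 * n))) ^ 3 := by gcongr
    _ = (Fintype.card F ^ 2) ^ 3 * 8 ^ 3 * #(A ^ (2 * n)) ^ 3 := by ring
    _ ≤ (Fintype.card F ^ 2) ^ 3 * 8 ^ 3 * (253 * (7 * Y) ^ 3 * #(A ^ (14 * n)) ^ 2) := by gcongr
    _ = 56 ^ 3 * 253 * (Fintype.card F ^ 2 * Y) ^ 3 * #(A ^ (14 * n)) ^ 2 := by ring
    _ ≤ 56 ^ 3 * 253 * (8 * #(A ^ (14 * n))) ^ 3 * #(A ^ (14 * n)) ^ 2 := by gcongr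
    _ = 448 ^ 3 * 253 * #(A ^ (14 * n)) ^ 5 := by ring

end ManyTori

/-! ### Filling the group -/

section DilatedSumset

variable {ι α β : Type*} [DecidableEq β]

theorem card_sq_le_card_image_mul_card_filter_eq (s : Finset α) (f : α → β) :
    #s ^ 2 ≤ #(s.image f) * #{r ∈ s ×ˢ s | f r.1 = f r.2} := by
  classical
  have hmaps : ∀ a ∈ s, f a ∈ s.image f := fun a ha ↦ mem_image_of_mem f ha
  have hsum : #{r ∈ s ×ˢ s | f r.1 = f r.2} = ∑ b ∈ s.image f, #{a ∈ s | f a = b} ^ 2 := by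
    rw [card_eq_sum_card_fiberwise (f := fun r ↦ f r.1) (t := s.image f)
      fun r hr ↦ hmaps _ (mem_product.1 (mem_filter.1 hr).1).1]
    refine sum_congr rfl fun b _ ↦ ?_
    rw [sq, ← card_product]
    congr 1
    ext ⟨a, a'⟩
    simp only [mem_filter, mem_product]
    grind
  rw [hsum, card_eq_sum_card_fiberwise hmaps]
  exact sq_sum_le_card_mul_sum_sq

variable [Fintype ι] {f : ι → α → β}

theorem sum_card_filter_eq_le (hf : ∀ a b, a ≠ b → {i | f i a = f i b}.Subsingleton)
    (s : Finset α) :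
    ∑ i, #{r ∈ s ×ˢ s | f i r.1 = f i r.2} ≤ #s * (Fintype.card ι + #s) := by
  classical
  calc ∑ i, #{r ∈ s ×ˢ s | f i r.1 = f i r.2} = ∑ r ∈ s ×ˢ s, #{i | f i r.1 = f i r.2} :=
        sum_card_bipartiteAbove_eq_sum_card_bipartiteBelow fun i (r : α × α) ↦ f i r.1 = f i r.2
    _ = ∑ a ∈ s, ∑ b ∈ s, #{i | f i a = f i b} := sum_product ..
    _ ≤ ∑ _a ∈ s, (Fintype.card ι + #s) := sum_le_sum fun a ha ↦ ?_
    _ = #s * (Fintype.card ι + #s) := by rw [sum_const, smul_eq_mul]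
  rw [← add_sum_erase s _ ha]
  gcongr
  · exact card_le_univ _
  · have hone : ∀ b ∈ s.erase a, #{i | f i a = f i b} ≤ 1 := fun b hb ↦ by
      rw [card_le_one]
      intro i hi j hj
      exact hf a b (ne_of_mem_erase hb).symm (mem_filter.1 hi).2 (mem_filter.1 hj).2
    simpa using (sum_le_card_nsmul _ _ _ hone).trans
      (Nat.mul_le_mul_right 1 (card_le_card (erase_subset a s)))

theorem exists_card_mul_le_card_image_mul [Fintype β] (hcard : Fintype.card β ≤ Fintype.card ι)
    (hf : ∀ a b, a ≠ b → {i | f i a = f i b}.Subsingleton) {s : Finset α} (hs : s.Nonempty)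
    {I : Finset ι} (hI : I.Nonempty) :
    ∃ i ∈ I, Fintype.card ι * #I * #s ≤ #(s.image (f i)) * (#s * #I + Fintype.card ι ^ 2) := by
  classical
  set q := Fintype.card ι with hq
  let E (i : ι) : ℕ := #{r ∈ s ×ˢ s | f i r.1 = f i r.2}
  have hE (i : ι) : #s ^ 2 ≤ #(s.image (f i)) * E i :=
    card_sq_le_card_image_mul_card_filter_eq s (f i)
  have hcompl : #Iᶜ * #s ^ 2 ≤ q * ∑ i ∈ Iᶜ, E i := by
    rw [mul_sum, ← smul_eq_mul]
    refine card_nsmul_le_sum _ _ _ fun i _ ↦ (hE i).trans ?_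
    gcongr
    exact (card_le_univ _).trans hcard
  have htotal : q * ∑ i ∈ I, E i + q * ∑ i ∈ Iᶜ, E i ≤ q * (#s * (q + #s)) := by
    rw [← mul_add, sum_add_sum_compl]
    exact Nat.mul_le_mul_left q (sum_card_filter_eq_le hf s)
  have hsplit : q * (#s * (q + #s)) = q ^ 2 * #s + #I * #s ^ 2 + #Iᶜ * #s ^ 2 := by
    rw [add_assoc, ← add_mul, card_add_card_compl, ← hq]
    ring
  have hsum : ∑ i ∈ I, q * #I * E i ≤ ∑ i ∈ I, (#s * (#s * #I + q ^ 2)) := by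
    rw [← mul_sum, sum_const, smul_eq_mul]
    calc q * #I * ∑ i ∈ I, E i = #I * (q * ∑ i ∈ I, E i) := by ring
      _ ≤ #I * (q ^ 2 * #s + #I * #s ^ 2) := by gcongr; lia
      _ = #I * (#s * (#s * #I + q ^ 2)) := by ring
  obtain ⟨i, hi, hle⟩ := exists_le_of_sum_le hI hsum
  refine ⟨i, hi, Nat.le_of_mul_le_mul_left ?_ hs.card_pos⟩
  calc #s * (q * #I * #s) = q * #I * #s ^ 2 := by ring
    _ ≤ q * #I * (#(s.image (f i)) * E i) := by gcongr; exact hE i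
    _ = #(s.image (f i)) * (q * #I * E i) := by ring
    _ ≤ #(s.image (f i)) * (#s * (#s * #I + q ^ 2)) := by gcongr
    _ = #s * (#(s.image (f i)) * (#s * #I + q ^ 2)) := by ring

variable {F : Type*} [Field F] [Fintype F] [DecidableEq F]

theorem exists_card_mul_le_card_add_smul_mul {X Ξ : Finset F} (hX : X.Nonempty)
    (hΞ : Ξ.Nonempty) :
    ∃ ξ ∈ Ξ, Fintype.card F * #Ξ * #X ^ 2 ≤ #(X + ξ • X) * (#X ^ 2 * #Ξ + Fintype.card F ^ 2) := by
  have hsub (a b : F × F) (hab : a ≠ b) :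
      {ξ : F | a.1 + ξ * a.2 = b.1 + ξ * b.2}.Subsingleton := by
    intro ξ hξ η hη
    rw [Set.mem_ofPred_eq] at hξ hη
    have hne : a.2 - b.2 ≠ 0 := fun h ↦ hab (Prod.ext
      (by linear_combination hξ - ξ * h) (by linear_combination h))
    exact mul_right_cancel₀ hne (by linear_combination hξ - hη)
  obtain ⟨ξ, hξ, hle⟩ := exists_card_mul_le_card_image_mul le_rfl hsub (hX.product hX) hΞ
  have himage : (X ×ˢ X).image (fun r ↦ r.1 + ξ * r.2) = X + ξ • X := by
    ext z
    simp [mem_add, mem_smul_finset, and_assoc]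
  refine ⟨ξ, hξ, ?_⟩
  rwa [himage, card_product, ← sq] at hle

theorem add_self_eq_univ {M : Type*} [AddGroup M] [Fintype M] [DecidableEq M] {X : Finset M}
    (hX : Fintype.card M < 2 * #X) : X + X = univ := by
  refine eq_univ_of_forall fun z ↦ ?_
  have hcard : #(X.image (z - ·)) = #X := card_image_of_injective X sub_right_injective
  obtain ⟨x, hx⟩ := inter_nonempty_of_card_lt_card_add_card (subset_univ X)
    (subset_univ (X.image (z - ·))) (by rw [hcard, card_univ]; lia)
  obtain ⟨hxX, hxz⟩ := mem_inter.1 hx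
  obtain ⟨y, hy, rfl⟩ := mem_image.1 hxz
  exact mem_add.2 ⟨z - y, hxX, y, hy, sub_add_cancel z y⟩

end DilatedSumset

section TwoDilations

variable {q k m m' h : ℕ}

theorem lt_two_mul_of_sq_lt_mul_sq (hq : 0 < q) (hm : q ^ 2 < k * m ^ 2)
    (hstep : q * k * m ^ 2 ≤ m' * (m ^ 2 * k + q ^ 2)) : q < 2 * m' := by
  by_contra! hlt
  refine hm.not_ge (Nat.le_of_mul_le_mul_left (?_ : q * (k * m ^ 2) ≤ q * q ^ 2) hq)
  have hdouble : 2 * (q * (k * m ^ 2)) ≤ q * (k * m ^ 2) + q * q ^ 2 :=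
    calc 2 * (q * (k * m ^ 2)) = 2 * (q * k * m ^ 2) := by ring
      _ ≤ 2 * (m' * (m ^ 2 * k + q ^ 2)) := by gcongr
      _ = 2 * m' * (m ^ 2 * k + q ^ 2) := by ring
      _ ≤ q * (m ^ 2 * k + q ^ 2) := by gcongr
      _ = q * (k * m ^ 2) + q * q ^ 2 := by ring
  lia

theorem four_le_of_lt_pow_four (hq : 81 ≤ q) (hh : 256 * q ^ 9 < h ^ 4) (hm : m ≤ q)
    (hk : h ≤ 4 * q * k * m) : 4 ≤ k := by
  by_contra! hlt
  refine hh.not_ge ?_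
  calc h ^ 4 ≤ (4 * q * k * m) ^ 4 := by gcongr
    _ ≤ (4 * q * 3 * q) ^ 4 := by gcongr; lia
    _ = 256 * q ^ 8 * 81 := by ring
    _ ≤ 256 * q ^ 8 * q := by gcongr
    _ = 256 * q ^ 9 := by ring

theorem sq_lt_mul_sq_of_lt_pow_four (hq : 81 ≤ q) (hh : 256 * q ^ 9 < h ^ 4) (hm : m ≤ q)
    (hhm : h ≤ q ^ 2 * m) (hk : h ≤ 4 * q * k * m)
    (hstep : q * k * m ^ 2 ≤ m' * (m ^ 2 * k + q ^ 2)) : q ^ 2 < k * m' ^ 2 := by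
  have hqpos : 0 < q := by lia
  rcases lt_or_ge (q ^ 2) (k * m ^ 2) with hlarge | hsmall
  · have hm' := lt_two_mul_of_sq_lt_mul_sq hqpos hlarge hstep
    calc q ^ 2 < (2 * m') ^ 2 := by gcongr
      _ = 4 * m' ^ 2 := by ring
      _ ≤ k * m' ^ 2 := by gcongr; exact four_le_of_lt_pow_four hq hh hm hk
  · have hm' : k * m ^ 2 ≤ 2 * q * m' := by
      refine Nat.le_of_mul_le_mul_left ?_ hqpos
      calc q * (k * m ^ 2) = q * k * m ^ 2 := by ring
        _ ≤ m' * (m ^ 2 * k + q ^ 2) := hstep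
        _ ≤ m' * (q ^ 2 + q ^ 2) := by rw [mul_comm (m ^ 2)]; gcongr
        _ = q * (2 * q * m') := by ring
    refine Nat.lt_of_mul_lt_mul_left (a := 256 * q ^ 7) ?_
    calc 256 * q ^ 7 * q ^ 2 = 256 * q ^ 9 := by ring
      _ < h * h ^ 3 := by rwa [← pow_succ']
      _ ≤ (q ^ 2 * m) * (4 * q * k * m) ^ 3 := by gcongr
      _ = 64 * q ^ 5 * k * (k * m ^ 2) ^ 2 := by ring
      _ ≤ 64 * q ^ 5 * k * (2 * q * m') ^ 2 := by gcongr
      _ = 256 * q ^ 7 * (k * m' ^ 2) := by ring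

end TwoDilations

section Unipotent

variable {F : Type*} [Field F]

theorem upperUnipotent_mul (x y : F) :
    upperUnipotent x * upperUnipotent y = upperUnipotent (x + y) :=
  (Matrix.SpecialLinearGroup.transvection_add _ x y).symm

theorem conj_upperUnipotent {e : SL(2, F)} (he : e.1 1 0 = 0) (x : F) :
    e * upperUnipotent x * e⁻¹ = upperUnipotent (e.1 0 0 ^ 2 * x) := by
  have hdet : e.1 0 0 * e.1 1 1 = 1 := by
    simpa [he] using (Matrix.det_fin_two e.1).symm.trans e.2
  rw [mul_inv_eq_iff_eq_mul]
  refine Subtype.ext ?_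
  change e.1 * (upperUnipotent x).1 = (upperUnipotent (e.1 0 0 ^ 2 * x)).1 * e.1
  rw [coe_upperUnipotent, coe_upperUnipotent]
  ext i j
  have h01 : e.1 0 0 * x = e.1 0 0 ^ 2 * x * e.1 1 1 := by
    linear_combination (-e.1 0 0 * x) * hdet
  fin_cases i <;> fin_cases j <;> simp [Matrix.mul_apply, he, h01, add_comm]

theorem eq_upperUnipotent {g : SL(2, F)} (h00 : g.1 0 0 = 1) (h10 : g.1 1 0 = 0) :
    g = upperUnipotent (g.1 0 1) := by
  have h11 : g.1 1 1 = 1 := by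
    simpa [h00, h10] using (Matrix.det_fin_two g.1).symm.trans g.2
  refine Subtype.ext ?_
  rw [coe_upperUnipotent]
  ext i j
  fin_cases i <;> fin_cases j <;> simp [h00, h10, h11]

theorem inv_mul_apply_zero_zero (x y : SL(2, F)) :
    (x⁻¹ * y).1 0 0 = x.1 1 1 * y.1 0 0 - x.1 0 1 * y.1 1 0 := by
  simp only [Matrix.SpecialLinearGroup.coe_mul, Matrix.SpecialLinearGroup.coe_inv,
    Matrix.adjugate_fin_two, Matrix.mul_apply, Fin.sum_univ_two, Matrix.of_apply, Matrix.cons_val',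
    Matrix.cons_val_zero, Matrix.cons_val_one, Matrix.cons_val_fin_one]
  ring

theorem inv_mul_apply_one_zero (x y : SL(2, F)) :
    (x⁻¹ * y).1 1 0 = x.1 0 0 * y.1 1 0 - x.1 1 0 * y.1 0 0 := by
  simp only [Matrix.SpecialLinearGroup.coe_mul, Matrix.SpecialLinearGroup.coe_inv,
    Matrix.adjugate_fin_two, Matrix.mul_apply, Fin.sum_univ_two, Matrix.of_apply, Matrix.cons_val',
    Matrix.cons_val_zero, Matrix.cons_val_one, Matrix.cons_val_fin_one]
  ring

variable [Fintype F]

open Classical in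
/-- The parameters of the upper unipotent elements of `S`. -/
noncomputable def unipotentPart (S : Finset SL(2, F)) : Finset F := {x | upperUnipotent x ∈ S}

theorem mem_unipotentPart {S : Finset SL(2, F)} {x : F} :
    x ∈ unipotentPart S ↔ upperUnipotent x ∈ S := by
  simp [unipotentPart]

theorem card_le_card_unipotentPart {S W : Finset SL(2, F)}
    (hW : ∀ x ∈ S, ∀ y ∈ S, x⁻¹ * y ∈ W)
    (hcol : ∀ x ∈ S, ∀ y ∈ S, ∀ i, x.1 i 0 = y.1 i 0) : #S ≤ #(unipotentPart W) := by
  obtain rfl | ⟨x, hx⟩ := S.eq_empty_or_nonempty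
  · simp
  have hunip : ∀ y ∈ S, x⁻¹ * y = upperUnipotent ((x⁻¹ * y).1 0 1) := fun y hy ↦ by
    have hdet := (Matrix.det_fin_two x.1).symm.trans x.2
    refine eq_upperUnipotent ?_ ?_
    · rw [inv_mul_apply_zero_zero, ← hcol x hx y hy, ← hcol x hx y hy]
      linear_combination hdet
    · rw [inv_mul_apply_one_zero, ← hcol x hx y hy, ← hcol x hx y hy]
      ring
  refine card_le_card_of_injOn (fun y ↦ (x⁻¹ * y).1 0 1) (fun y hy ↦ ?_) fun y hy z hz hyz ↦ ?_
  · rw [mem_coe, mem_unipotentPart, ← hunip y hy]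
    exact hW x hx y hy
  · refine mul_left_cancel (a := x⁻¹) ?_
    rw [hunip y hy, hunip z hz]
    exact congrArg upperUnipotent hyz

end Unipotent

section Borel

variable {F : Type*} [Field F]

open Classical in
/-- The upper triangular elements of `S`. -/
noncomputable def borelPart (S : Finset SL(2, F)) : Finset SL(2, F) := {e ∈ S | e.1 1 0 = 0}

theorem mem_borelPart {S : Finset SL(2, F)} {e : SL(2, F)} :
    e ∈ borelPart S ↔ e ∈ S ∧ e.1 1 0 = 0 := by
  simp [borelPart]

open Classical in
/-- The point of the projective line spanned by the first column of `g`, with `none` the point at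
infinity. Its fibres are the left cosets of the upper triangular subgroup. -/
noncomputable def columnSlope (g : SL(2, F)) : Option F :=
  if g.1 1 0 = 0 then none else some (g.1 0 0 / g.1 1 0)

theorem inv_mul_apply_one_zero_eq_zero {x y : SL(2, F)} (hxy : columnSlope x = columnSlope y) :
    (x⁻¹ * y).1 1 0 = 0 := by
  rw [inv_mul_apply_one_zero]
  unfold columnSlope at hxy
  split_ifs at hxy with hx hy hy
  · rw [hx, hy]
    ring
  · linear_combination (div_eq_div_iff hx hy).1 (Option.some_injective _ hxy)

variable [Fintype F]

theorem unipotentPart_mono {S T : Finset SL(2, F)} (hST : S ⊆ T) :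
    unipotentPart S ⊆ unipotentPart T :=
  fun _ hx ↦ mem_unipotentPart.2 (hST (mem_unipotentPart.1 hx))

variable [DecidableEq SL(2, F)]

theorem card_le_card_sq_mul_card_unipotentPart (S : Finset SL(2, F)) :
    #S ≤ Fintype.card F ^ 2 * #(unipotentPart (S⁻¹ * S)) := by
  classical
  have hcard : #(univ : Finset (F × F)) = Fintype.card F ^ 2 := by
    rw [card_univ, Fintype.card_prod, sq]
  rw [mul_comm, ← hcard]
  refine card_le_mul_card_image_of_maps_to (f := fun g : SL(2, F) ↦ (g.1 0 0, g.1 1 0))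
    (fun g _ ↦ mem_univ _) _ fun b _ ↦ card_le_card_unipotentPart (fun x hx y hy ↦ ?_) ?_
  · exact mul_mem_mul (inv_mem_inv (mem_filter.1 hx).1) (mem_filter.1 hy).1
  · intro x hx y hy i
    have hcol := (mem_filter.1 hx).2.trans (mem_filter.1 hy).2.symm
    fin_cases i
    · exact congrArg Prod.fst hcol
    · exact congrArg Prod.snd hcol

theorem card_le_two_mul_card_mul_card_borelPart (S : Finset SL(2, F)) :
    #S ≤ 2 * Fintype.card F * #(borelPart (S⁻¹ * S)) := by
  classical
  have hfiber (b : Option F) : #{g ∈ S | columnSlope g = b} ≤ #(borelPart (S⁻¹ * S)) := by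
    obtain hempty | ⟨x, hx⟩ := {g ∈ S | columnSlope g = b}.eq_empty_or_nonempty
    · simp [hempty]
    refine card_le_card_of_injOn (x⁻¹ * ·) (fun y hy ↦ ?_) (mul_right_injective x⁻¹).injOn
    rw [mem_coe, mem_filter] at hy
    rw [mem_filter] at hx
    exact mem_borelPart.2 ⟨mul_mem_mul (inv_mem_inv hx.1) hy.1,
      inv_mul_apply_one_zero_eq_zero (hx.2.trans hy.2.symm)⟩
  have hcard : #(univ : Finset (Option F)) ≤ 2 * Fintype.card F := by
    rw [card_univ, Fintype.card_option]
    have := Fintype.card_pos (α := F)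
    lia
  rw [mul_comm]
  exact (card_le_mul_card_image_of_maps_to (fun g _ ↦ mem_univ (columnSlope g)) _ fun b _ ↦
    hfiber b).trans (Nat.mul_le_mul_left _ hcard)

theorem card_le_two_mul_card_unipotentPart_mul_card_image_sq [DecidableEq F] {E : Finset SL(2, F)}
    (hE : ∀ e ∈ E, e.1 1 0 = 0) :
    #E ≤ 2 * #(unipotentPart (E⁻¹ * E)) * #(E.image fun e ↦ e.1 0 0 ^ 2) := by
  have hfiber (c : F) : #{e ∈ E | e.1 0 0 = c} ≤ #(unipotentPart (E⁻¹ * E)) := by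
    refine card_le_card_unipotentPart (fun x hx y hy ↦ ?_) fun x hx y hy i ↦ ?_
    all_goals rw [mem_filter] at hx hy
    · exact mul_mem_mul (inv_mem_inv hx.1) hy.1
    · fin_cases i
      · exact hx.2.trans hy.2.symm
      · exact (hE x hx.1).trans (hE y hy.1).symm
  refine card_le_mul_card_image _ _ fun b hb ↦ ?_
  obtain ⟨e, -, rfl⟩ := mem_image.1 hb
  have hsub : {x ∈ E | x.1 0 0 ^ 2 = e.1 0 0 ^ 2} ⊆
      {x ∈ E | x.1 0 0 = e.1 0 0} ∪ {x ∈ E | x.1 0 0 = -e.1 0 0} := by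
    rw [← filter_or]
    exact monotone_filter_right E fun x _ hx ↦ sq_eq_sq_iff_eq_or_eq_neg.1 hx
  calc #{x ∈ E | x.1 0 0 ^ 2 = e.1 0 0 ^ 2} ≤ _ := card_le_card hsub
    _ ≤ _ := card_union_le _ _
    _ ≤ #(unipotentPart (E⁻¹ * E)) + #(unipotentPart (E⁻¹ * E)) :=
      add_le_add (hfiber _) (hfiber _)
    _ = 2 * #(unipotentPart (E⁻¹ * E)) := (two_mul _).symm

theorem card_le_four_mul_card_mul_card_image_sq_mul_card_unipotentPart [DecidableEq F]
    {H : Finset SL(2, F)} (hinv : H⁻¹ = H) :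
    #H ≤ 4 * Fintype.card F * #((borelPart (H ^ 2)).image fun e ↦ e.1 0 0 ^ 2) *
      #(unipotentPart (H ^ 4)) := by
  set E := borelPart (H ^ 2) with hE
  have hsub : E ⊆ H ^ 2 := fun e he ↦ (mem_borelPart.1 he).1
  have hEE : E⁻¹ * E ⊆ H ^ 4 :=
    calc E⁻¹ * E ⊆ (H ^ 2)⁻¹ * H ^ 2 := mul_subset_mul (inv_subset_inv hsub) hsub
      _ = H ^ 4 := by rw [inv_pow_eq_self hinv, ← pow_add]
  have hHE : #H ≤ 2 * Fintype.card F * #E := by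
    rw [hE, sq, ← congrArg (· * H) hinv]
    exact card_le_two_mul_card_mul_card_borelPart H
  calc #H ≤ 2 * Fintype.card F * #E := hHE
    _ ≤ 2 * Fintype.card F *
        (2 * #(unipotentPart (E⁻¹ * E)) * #(E.image fun e ↦ e.1 0 0 ^ 2)) := by
      gcongr
      exact card_le_two_mul_card_unipotentPart_mul_card_image_sq fun e he ↦ (mem_borelPart.1 he).2
    _ ≤ 2 * Fintype.card F *
        (2 * #(unipotentPart (H ^ 4)) * #(E.image fun e ↦ e.1 0 0 ^ 2)) := by
      gcongr
      exact unipotentPart_mono hEE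
    _ = 4 * Fintype.card F * #(E.image fun e ↦ e.1 0 0 ^ 2) * #(unipotentPart (H ^ 4)) := by ring

theorem add_smul_subset_unipotentPart [DecidableEq F] {S T : Finset SL(2, F)} {X : Finset F}
    (hX : X ⊆ unipotentPart S) {e : SL(2, F)} (he : e ∈ borelPart T) :
    X + e.1 0 0 ^ 2 • X ⊆ unipotentPart (S * (T * S * T⁻¹)) := by
  obtain ⟨heT, he0⟩ := mem_borelPart.1 he
  rintro z hz
  obtain ⟨x, hx, w, hw, rfl⟩ := mem_add.1 hz
  obtain ⟨y, hy, rfl⟩ := mem_smul_finset.1 hw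
  rw [mem_unipotentPart, ← upperUnipotent_mul, smul_eq_mul, ← conj_upperUnipotent he0]
  exact mul_mem_mul (mem_unipotentPart.1 (hX hx)) (mul_mem_mul
    (mul_mem_mul heT (mem_unipotentPart.1 (hX hy))) (inv_mem_inv heT))

theorem unipotentPart_mul_self_eq_univ {S : Finset SL(2, F)}
    (hS : Fintype.card F < 2 * #(unipotentPart S)) : unipotentPart (S * S) = univ := by
  classical
  refine eq_univ_of_forall fun z ↦ ?_
  obtain ⟨x, hx, y, hy, rfl⟩ := mem_add.1 (add_self_eq_univ hS ▸ mem_univ z)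
  rw [mem_unipotentPart, ← upperUnipotent_mul]
  exact mul_mem_mul (mem_unipotentPart.1 hx) (mem_unipotentPart.1 hy)

theorem unipotentPart_pow_eq_univ (hF : 81 ≤ Fintype.card F) {H : Finset SL(2, F)}
    (hinv : H⁻¹ = H) (hone : 1 ∈ H) (hH : 256 * Fintype.card F ^ 9 < #H ^ 4) :
    unipotentPart (H ^ 56) = univ := by
  classical
  set Ξ : Finset F := (borelPart (H ^ 2)).image fun e ↦ e.1 0 0 ^ 2
  set X := unipotentPart (H ^ 4) with hX
  have hΞne : Ξ.Nonempty :=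
    ⟨_, mem_image_of_mem _ (mem_borelPart.2 ⟨one_mem_pow hone, by simp⟩)⟩
  have hXne : X.Nonempty := ⟨0, mem_unipotentPart.2 (by simpa using one_mem_pow hone)⟩
  have hHX : #H ≤ Fintype.card F ^ 2 * #X := by
    refine (card_le_card_sq_mul_card_unipotentPart H).trans ?_
    gcongr
    refine unipotentPart_mono ?_
    rw [hinv, ← sq]
    exact pow_subset_pow_right hone (by lia)
  have hHΞ := card_le_four_mul_card_mul_card_image_sq_mul_card_unipotentPart hinv
  have hdilate {Y : Finset F} {n : ℕ} (hY : Y ⊆ unipotentPart (H ^ n)) {ξ : F} (hξ : ξ ∈ Ξ) :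
      Y + ξ • Y ⊆ unipotentPart (H ^ (n + (2 + n + 2))) := by
    obtain ⟨e, he, rfl⟩ := mem_image.1 hξ
    have hsub := add_smul_subset_unipotentPart hY he
    rwa [inv_pow_eq_self hinv, ← pow_add, ← pow_add, ← pow_add] at hsub
  obtain ⟨ξ, hξ, hstep⟩ := exists_card_mul_le_card_add_smul_mul hXne hΞne
  have hYne : (X + ξ • X).Nonempty := hXne.add hXne.smul_finset
  obtain ⟨η, hη, hstep'⟩ := exists_card_mul_le_card_add_smul_mul hYne hΞne
  have hlarge := lt_two_mul_of_sq_lt_mul_sq (by lia)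
    (sq_lt_mul_sq_of_lt_pow_four hF hH (card_le_univ X) hHX hHΞ hstep) hstep'
  have hpow := unipotentPart_mul_self_eq_univ (hlarge.trans_le
    (Nat.mul_le_mul_left 2 (card_le_card (hdilate (hdilate hX.subset hξ) hη))))
  rwa [← pow_add] at hpow

end Borel

section Bruhat

variable {F : Type*} [Field F]

theorem eq_upperUnipotent_mul_mul_upperUnipotent {g k : SL(2, F)} (hg : g.1 1 0 ≠ 0)
    (hk : k.1 1 0 = g.1 1 0) :
    k = upperUnipotent ((k.1 0 0 - g.1 0 0) / g.1 1 0) * g *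
      upperUnipotent ((k.1 1 1 - g.1 1 1) / g.1 1 0) := by
  have hgdet := (Matrix.det_fin_two g.1).symm.trans g.2
  have hkdet := (Matrix.det_fin_two k.1).symm.trans k.2
  rw [hk] at hkdet
  refine Subtype.ext ?_
  change k.1 = (upperUnipotent _).1 * g.1 * (upperUnipotent _).1
  rw [coe_upperUnipotent, coe_upperUnipotent]
  ext i j
  fin_cases i <;> fin_cases j <;> simp [Matrix.mul_apply, Fin.sum_univ_two, hk, -Matrix.cons_mul]
  · field_simp
    ring
  · field_simp
    linear_combination hgdet - hkdet
  · field_simp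
    ring

theorem exists_mul_eq_of_apply_one_zero_ne_zero {c : F} (hc : c ≠ 0) {k : SL(2, F)}
    (hk : k.1 1 0 ≠ 0) : ∃ m n : SL(2, F), m.1 1 0 = c ∧ n.1 1 0 = c ∧ m * n = k := by
  let m : SL(2, F) := ⟨!![(c + c * k.1 0 0) / k.1 1 0, -1 / c; c, 0], by
    simp [Matrix.det_fin_two, div_mul_cancel₀ _ hc]⟩
  refine ⟨m, m⁻¹ * k, by simp [m], ?_, mul_inv_cancel_left m k⟩
  rw [inv_mul_apply_one_zero]
  simp only [m, Matrix.of_apply, Matrix.cons_val', Matrix.cons_val_zero, Matrix.cons_val_one,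
    Matrix.cons_val_fin_one]
  field_simp
  ring

variable [DecidableEq SL(2, F)]

theorem exists_mem_apply_one_zero_ne_zero {A : Finset SL(2, F)} (hinv : A⁻¹ = A)
    (hgen : Subgroup.closure (A : Set SL(2, F)) = ⊤) : ∃ g ∈ A, g.1 1 0 ≠ 0 := by
  by_contra! hA
  have hall (g : SL(2, F)) : g.1 1 0 = 0 := by
    induction g using induction_of_symm_of_closure_eq_top hinv hgen with
    | one => simp
    | mul_right x hx a ha =>
      simp [Matrix.SpecialLinearGroup.coe_mul, Matrix.mul_apply, hx, hA a ha]
  simpa using hall ⟨!![0, -1; 1, 0], by simp⟩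

variable [Fintype F]

theorem mem_pow_of_unipotentPart_eq_univ {H : Finset SL(2, F)} (hinv : H⁻¹ = H) (hone : 1 ∈ H)
    {g : SL(2, F)} (hgH : g ∈ H) (hg : g.1 1 0 ≠ 0) {n : ℕ}
    (hn : unipotentPart (H ^ n) = univ) (k : SL(2, F)) : k ∈ H ^ (4 * n + 3) := by
  have hU (x : F) : upperUnipotent x ∈ H ^ n := mem_unipotentPart.1 (hn ▸ mem_univ x)
  have heq {k : SL(2, F)} (hk : k.1 1 0 = g.1 1 0) : k ∈ H ^ (n + 1 + n) := by
    rw [eq_upperUnipotent_mul_mul_upperUnipotent hg hk, pow_add, pow_succ]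
    exact mul_mem_mul (mul_mem_mul (hU _) hgH) (hU _)
  have hne {k : SL(2, F)} (hk : k.1 1 0 ≠ 0) : k ∈ H ^ (4 * n + 2) := by
    obtain ⟨x, y, hx, hy, rfl⟩ := exists_mul_eq_of_apply_one_zero_ne_zero hg hk
    have hmem := mul_mem_mul (heq hx) (heq hy)
    rw [← pow_add] at hmem
    convert hmem using 2
    ring
  by_cases hk : k.1 1 0 = 0
  · have hkdet : k.1 0 0 * k.1 1 1 = 1 := by
      simpa [hk] using (Matrix.det_fin_two k.1).symm.trans k.2
    have hkg : (k * g).1 1 0 ≠ 0 := by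
      have hentry : (k * g).1 1 0 = k.1 1 1 * g.1 1 0 := by
        simp [Matrix.SpecialLinearGroup.coe_mul, Matrix.mul_apply, hk]
      rw [hentry]
      exact mul_ne_zero (right_ne_zero_of_mul_eq_one hkdet) hg
    rw [← mul_inv_cancel_right k g, pow_succ]
    exact mul_mem_mul (hne hkg) (hinv ▸ inv_mem_inv hgH)
  · exact pow_subset_pow_right hone (by lia) (hne hk)

theorem mem_pow_of_torusPart_nonempty (hF : 10 ^ 18 ≤ Fintype.card F) {A : Finset SL(2, F)}
    (hinv : A⁻¹ = A) (hone : 1 ∈ A) (hgen : Subgroup.closure (A : Set SL(2, F)) = ⊤) {n : ℕ}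
    (hn : 125 ≤ 2 * n) {t : SL(2, F)} (ht : t.1.trace ^ 2 ≠ 4)
    (hne : ∀ g : SL(2, F), (torusPart (A ^ (2 * n)) (g * t * g⁻¹)).Nonempty) (k : SL(2, F)) :
    k ∈ A ^ (3178 * n) := by
  set q := Fintype.card F with hq
  set H := A ^ (14 * n) with hH
  have hcard : 256 * q ^ 9 < #H ^ 4 := by
    have hle := card_pow_twelve_le_of_torusPart_nonempty (by lia) hinv hone hgen hn ht hne
    rw [← hq, ← hH] at hle
    by_contra! hlt
    have hq3 : q ^ 45 * q ^ 3 ≤ q ^ 45 * ((448 ^ 3 * 253) ^ 4 * 256 ^ 5) :=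
      calc q ^ 45 * q ^ 3 = (q ^ 12) ^ 4 := by ring
        _ ≤ (448 ^ 3 * 253 * #H ^ 5) ^ 4 := by gcongr
        _ = (448 ^ 3 * 253) ^ 4 * (#H ^ 4) ^ 5 := by ring
        _ ≤ (448 ^ 3 * 253) ^ 4 * (256 * q ^ 9) ^ 5 := by gcongr
        _ = q ^ 45 * ((448 ^ 3 * 253) ^ 4 * 256 ^ 5) := by ring
    have hsmall := (Nat.pow_le_pow_left hF 3).trans
      (Nat.le_of_mul_le_mul_left hq3 (Nat.pow_pos (by lia)))
    norm_num at hsmall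
  obtain ⟨g, hgA, hg⟩ := exists_mem_apply_one_zero_ne_zero hinv hgen
  have hHinv : H⁻¹ = H := inv_pow_eq_self hinv _
  have hHone : 1 ∈ H := one_mem_pow hone
  have hgH : g ∈ H := subset_pow hone (by lia) hgA
  have hmem {a N : ℕ} (ha : unipotentPart (H ^ a) = univ) (hN : N = 14 * n * (4 * a + 3)) :
      k ∈ A ^ N := by
    rw [hN, pow_mul]
    exact mem_pow_of_unipotentPart_eq_univ hHinv hHone hgH hg ha k
  exact hmem (unipotentPart_pow_eq_univ (by lia) hHinv hHone hcard) (by ring)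

end Bruhat

/-! ### Iterating the growth step -/

section Iteration

theorem exists_and_pow_le_div {P : ℕ → Prop} {a : ℕ → ℝ} {r L M : ℝ} (hr : 1 < r) (hL : 0 < L)
    (hzero : L ≤ a 0) (hM : ∀ k, a k ≤ M) (hstep : ∀ k, ¬ P k → r * a k ≤ a (k + 1)) :
    ∃ k, P k ∧ r ^ k ≤ M / L := by
  classical
  have hgrow (k : ℕ) (hk : ∀ i < k, ¬ P i) : r ^ k * L ≤ a k := by
    induction k with
    | zero => simpa using hzero
    | succ k ih =>
      calc r ^ (k + 1) * L = r * (r ^ k * L) := by ring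
        _ ≤ r * a k := by gcongr; exact ih fun i hi ↦ hk i (by lia)
        _ ≤ a (k + 1) := hstep k (hk k (by lia))
  have hbound (k : ℕ) (hk : ∀ i < k, ¬ P i) : r ^ k ≤ M / L :=
    (le_div_iff₀ hL).2 ((hgrow k hk).trans (hM k))
  have hex : ∃ k, P k := by
    by_contra! hnone
    obtain ⟨k, hk⟩ := pow_unbounded_of_one_lt (M / L) hr
    exact hk.not_ge (hbound k fun i _ ↦ hnone i)
  exact ⟨Nat.find hex, Nat.find_spec hex, hbound _ fun i hi ↦ Nat.find_min hex hi⟩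

theorem pow_le_rpow_log_div_log {r c x : ℝ} (hr : 1 < r) (hc : 1 ≤ c) {k : ℕ}
    (hk : r ^ k ≤ x) : c ^ k ≤ x ^ (Real.log c / Real.log r) := by
  have hlog : 0 < Real.log r := Real.log_pos hr
  have hrc : r ^ (Real.log c / Real.log r) = c := by
    rw [Real.rpow_def_of_pos (by linarith), mul_div_cancel₀ _ hlog.ne',
      Real.exp_log (by linarith)]
  calc c ^ k = (r ^ (Real.log c / Real.log r)) ^ k := by rw [hrc]
    _ = (r ^ k) ^ (Real.log c / Real.log r) := by
      rw [← Real.rpow_natCast, ← Real.rpow_natCast, ← Real.rpow_mul (by linarith),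
        ← Real.rpow_mul (by linarith), mul_comm]
    _ ≤ x ^ (Real.log c / Real.log r) :=
      Real.rpow_le_rpow (by positivity) hk (div_nonneg (Real.log_nonneg hc) hlog.le)

theorem mul_log_sub_log_le_of_pow_three_le {x y C : ℝ} (hx : 0 < x) (hy : 0 < y) (hC : 0 < C)
    (h : x ^ 3 ≤ C * y ^ 2) :
    3 / 2 * (Real.log x - Real.log C) ≤ Real.log y - Real.log C := by
  have hlog := Real.log_le_log (by positivity) h
  rw [Real.log_mul hC.ne' (by positivity), Real.log_pow, Real.log_pow] at hlog
  push_cast at hlog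
  linarith

/-- The exponents `n` for which `A ^ n` is considered in the iteration: it starts with the exponent
of the product set containing a test set, and a step of tripling growth replaces `n` by
`8 * n + 129`. -/
def growthExponent : ℕ → ℕ
  | 0 => 125
  | k + 1 => 8 * growthExponent k + 129

theorem le_growthExponent (k : ℕ) : 125 ≤ growthExponent k := by
  cases k with
  | zero => exact le_rfl
  | succ k => rw [growthExponent]; lia

theorem growthExponent_add_le (k : ℕ) : growthExponent k + 19 ≤ 144 * 8 ^ k := by
  induction k with
  | zero => exact le_rfl
  | succ k ih => rw [growthExponent, pow_succ]; lia

variable {F : Type*} [Field F] [Fintype F]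

theorem card_le_card_pow_four (S : Finset SL(2, F)) : #S ≤ Fintype.card F ^ 4 := by
  classical
  calc #S ≤ Fintype.card (Matrix (Fin 2) (Fin 2) F) :=
        card_le_card_of_injOn _ (fun g _ ↦ mem_univ g.1) Subtype.val_injective.injOn
    _ = Fintype.card F ^ 4 := by
      rw [← Nat.card_eq_fintype_card, ← Nat.card_eq_fintype_card, Matrix, Nat.card_fun,
        Nat.card_fun, Nat.card_fin, ← pow_mul]

variable [DecidableEq SL(2, F)] {A : Finset SL(2, F)} {C : ℝ}

theorem exists_torusPart_nonempty_and_pow_le (hF : 2 < Fintype.card F) (hinv : A⁻¹ = A)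
    (hone : 1 ∈ A) (hgen : Subgroup.closure (A : Set SL(2, F)) = ⊤) (hC : 54648 ≤ C)
    {N : ℝ} (hCN : C < N) (hNA : N ≤ #A) {t : SL(2, F)} (ht : IsGenericTrace t.1.trace)
    (htA : ∀ k, t ∈ A ^ (2 * growthExponent k)) :
    ∃ k, (∀ g : SL(2, F), (torusPart (A ^ (2 * growthExponent k)) (g * t * g⁻¹)).Nonempty) ∧
      (3 / 2 : ℝ) ^ k ≤ Real.log (Nat.card SL(2, F)) / Real.log (N / C) := by
  classical
  have hCpos : 0 < C := by linarith
  have hpos (n : ℕ) : (0 : ℝ) < #(A ^ n) := by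
    exact_mod_cast card_pos.2 ⟨1, one_mem_pow hone⟩
  refine exists_and_pow_le_div (a := fun k ↦ Real.log #(A ^ growthExponent k) - Real.log C)
    (by norm_num) (Real.log_pos ((one_lt_div hCpos).2 hCN)) ?_ (fun k ↦ ?_) fun k hk ↦ ?_
  · rw [Real.log_div (by linarith) hCpos.ne']
    have hNn {n : ℕ} (hn : n ≠ 0) : N ≤ #(A ^ n) :=
      hNA.trans (by exact_mod_cast card_le_card (subset_pow hone hn))
    exact sub_le_sub_right (Real.log_le_log (by linarith) (hNn (by simp [growthExponent]))) _
  · have hle : (#(A ^ growthExponent k) : ℝ) ≤ Nat.card SL(2, F) := by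
      rw [Nat.card_eq_fintype_card]
      exact_mod_cast card_le_univ _
    linarith [Real.log_le_log (hpos _) hle, Real.log_nonneg (show 1 ≤ C by linarith)]
  · have hgrow : (#(A ^ growthExponent k) : ℝ) ^ 3 ≤ 54648 * #(A ^ growthExponent (k + 1)) ^ 2 := by
      exact_mod_cast
        (torusPart_nonempty_or_card_pow_three_le hF hinv hone hgen (htA k) ht).resolve_left hk
    exact mul_log_sub_log_le_of_pow_three_le (hpos _) (hpos _) hCpos
      (hgrow.trans (mul_le_mul_of_nonneg_right hC (sq_nonneg _)))

theorem exists_mem_pow_le_mul_rpow (hF : 10 ^ 18 ≤ Fintype.card F) (hinv : A⁻¹ = A)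
    (hgen : Subgroup.closure (A : Set SL(2, F)) = ⊤) (hC : 457632 ≤ C) (hCA : C < #A)
    (g : SL(2, F)) :
    ∃ n : ℕ, g ∈ A ^ n ∧ (n : ℝ) ≤ C *
      (Real.log (Nat.card SL(2, F)) / Real.log (#A / C)) ^ (Real.log 8 / Real.log (3 / 2)) := by
  set B := insert 1 A with hB
  have hBone : 1 ∈ B := mem_insert_self 1 A
  have hBinv : B⁻¹ = B := by rw [hB, inv_insert, inv_one, hinv]
  have hBgen : Subgroup.closure (B : Set SL(2, F)) = ⊤ :=
    top_unique (hgen ▸ Subgroup.closure_mono (coe_subset.2 (subset_insert 1 A)))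
  have hAB : (#A : ℝ) ≤ #B := by exact_mod_cast card_le_card (subset_insert 1 A)
  obtain ⟨T, hTB, -, hT⟩ := exists_isTestSet hBinv hBone hBgen
  obtain ⟨t, htT, ht⟩ := hT.exists_isGenericTrace (by lia)
  have htB (k : ℕ) : t ∈ B ^ (2 * growthExponent k) :=
    mem_of_subset
      (hTB.trans (pow_subset_pow_right hBone (by linarith [le_growthExponent k]))) htT
  obtain ⟨k, hne, hk⟩ := exists_torusPart_nonempty_and_pow_le (by lia) hBinv hBone hBgen
    (by linarith) hCA hAB ht htB
  have hmem := mem_pow_of_torusPart_nonempty hF hBinv hBone hBgen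
    (by have := le_growthExponent k; lia) ht.2 hne g
  obtain ⟨j, hj, hgj⟩ := exists_mem_pow_of_mem_insert_one_pow hmem
  have hj8 : j ≤ 457632 * 8 ^ k := by
    have := growthExponent_add_le k
    lia
  refine ⟨j, hgj, ?_⟩
  calc (j : ℝ) ≤ 457632 * 8 ^ k := by exact_mod_cast hj8
    _ ≤ C * 8 ^ k := by gcongr
    _ ≤ _ := by
      gcongr
      exact pow_le_rpow_log_div_log (by norm_num) (by norm_num) hk

end Iteration

end SL2Growth

open scoped MatrixGroups in
theorem SL2_Cayley_diameter_general :
    ∃ C : ℝ, 1 < C ∧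
      ∀ (F : Type*) [Field F] [Finite F] [DecidableEq SL(2, F)] (A : Finset SL(2, F)),
        A⁻¹ = A → Subgroup.closure (A : Set SL(2, F)) = ⊤ → C < (A.card : ℝ) →
        ∀ g : SL(2, F), ∃ n : ℕ, g ∈ A ^ n ∧
          (n : ℝ) ≤ C * (Real.log (Nat.card SL(2, F)) / Real.log ((A.card : ℝ) / C)) ^
            (Real.log 8 / Real.log (3 / 2)) := by
  refine ⟨10 ^ 72, by norm_num, fun F _ _ _ A hinv hgen hA g ↦ ?_⟩
  have := Fintype.ofFinite F
  have hF : 10 ^ 18 ≤ Fintype.card F := by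
    by_contra! hlt
    have hle : A.card ≤ (10 ^ 18) ^ 4 :=
      (SL2Growth.card_le_card_pow_four A).trans (Nat.pow_le_pow_left hlt.le 4)
    have hle' : (A.card : ℝ) ≤ (10 ^ 18) ^ 4 := by exact_mod_cast hle
    linarith
  exact SL2Growth.exists_mem_pow_le_mul_rpow hF hinv hgen (by norm_num) hA g

/-- **Corollary 1.3** (diameter of the Cayley graph of SL₂(F_p)): there is an absolute
constant `C > 1` such that for every prime `p` and every finite symmetric generating set
`A` of `G = SL₂(F_p)` with `N = |A| > C`, every element of `G` is a product of at most
`C·(log|G| / log(N/C))^d` elements of `A`, where `d = log 8 / log(3/2)`. -/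
theorem SL2_Cayley_diameter :
    ∃ C : ℝ, 1 < C ∧
      ∀ (p : ℕ), p.Prime →
        ∀ A : Finset (Matrix.SpecialLinearGroup (Fin 2) (ZMod p)),
          A⁻¹ = A →
          Subgroup.closure (A : Set (Matrix.SpecialLinearGroup (Fin 2) (ZMod p))) = ⊤ →
          C < (A.card : ℝ) →
          ∀ g : Matrix.SpecialLinearGroup (Fin 2) (ZMod p),
            ∃ n : ℕ, g ∈ A ^ n ∧
              (n : ℝ) ≤ C *
                (Real.log (Nat.card (Matrix.SpecialLinearGroup (Fin 2) (ZMod p))) /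
                    Real.log ((A.card : ℝ) / C)) ^ (Real.log 8 / Real.log (3 / 2)) :=
  have ⟨C, hC, h⟩ := SL2_Cayley_diameter_general
  ⟨C, hC, fun p hp ↦ have := Fact.mk hp; h (ZMod p)⟩
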